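/- arXiv:1312.6563 — 2 statements merged into one kernel-verified Lean document; each statement's English description precedes it below -/
import Mathlib

section
/- Let X be a countable ultrametric space, let n ∈ ℕ, and let 𝓐 be an FD family in X. Then there exist γ_0, …, γ_n ∈ τ(Id,𝓐) such that the following holds: for every FD family 𝓑 such that X has the 𝓑-extremality property, the orbit of the tuple (γ_0,…,γ_n) under the diagonal conjugation action of τ(Id,𝓑), namely {(hγ_0h^{-1},…,hγ_nh^{-1}) : h ∈ τ(Id,𝓑)}, is somewhere dense in (τ(Id,𝓐))^{n+1} (with the topology inherited from Iso(X)^{n+1}). Moreover, if X has the 𝓐-extremality property, then the orbit of (γ_0,…,γ_n) under the diagonal conjugation action of τ(Id,𝓐) is dense in (τ(Id,𝓐))^{n+1}. -/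
/-!
The tuple `γ` is built as a generic union of finite partial tuples.

*Homogeneity.* In an ultrametric space the balls of radius `dist y (k y)` about `y` and `k y` can be
exchanged by means of an isometry `k`, everything else being fixed (`exists_swap`). Hence a finite
partial isometry moving points within their orbits extends to an isometry, also inside the
stabilizer of a set or of a family of balls (`LocalGroup.extend`). By descending induction over the
distances of a finite set one obtains finite sets with enough symmetries (`exists_good`), so that
every tuple of isometries can be altered off a given finite set to have a finite invariant set
containing it (`exists_finite_invariant`). Conditions are such tuples with a finite invariant set.

*Amalgamation.* For a finite family `Β` of balls, `ballStab Β` is the group τ(Id, Β). Extremality is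
used through the property `ExtStar`: a point that is moved by a maximal distance `t` has
an orbit that meets infinitely many balls of radius `t`. This property is stable under unions and
under conjugation. Moving each point of a finite set `Z'` by a large displacement that depends only
on the displacements available to that point brings `Z'` into general position, and then a tuple
`u` on `Z'` close to `g` on the centres of `Β` becomes compatible with `g` on a finite
invariant set `Z` (`ExtStar.amalgamate`). So conditions realizing a conjugate of `u` are dense.

*Genericity.* A sequence of conditions starting with the identity on the centres of 𝓐 meets all
the sets `taskSet` that are dense below one of its terms (`exists_generic`). For an extremal family
`Β` whose centres lie in the invariant set of some condition and which is invariant under `γ`, each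
tuple `w` close to `γ` on `Β` is then a limit of conjugates of `γ` by `ballStab Β`
(`exists_conj_close`).

For 𝓐 itself `γ` fixes the centres, and every tuple in τ(Id, 𝓐) is close to `γ`, which gives
density. For a general extremal 𝓑, a maximal extremal family containing 𝓑 with centres in a finite
`γ`-invariant set is `γ`-invariant (`ExtStar.exists_invariant`), and it determines the open set.
-/

open Metric Set Topology

namespace UltraGen

variable {X : Type*} [MetricSpace X]

/-- `B` is a ball of radius `r` (i.e. `B = ball x r` for some center, with `r > 0`). -/
def IsBallRad (B : Set X) (r : ℝ) : Prop := 0 < r ∧ ∃ x : X, B = Metric.ball x r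

/-- `B` is a ball in `X`. -/
def IsBall (B : Set X) : Prop := ∃ r, IsBallRad B r

/-- An FD family: a finite family of pairwise disjoint balls. -/
def FDFamily (𝓑 : Set (Set X)) : Prop :=
  𝓑.Finite ∧ (∀ B ∈ 𝓑, IsBall B) ∧ 𝓑.Pairwise fun B B' => Disjoint B B'

/-- τ(g,𝓑) = {g' ∈ Iso(X) : g'[B] = g[B] for all B ∈ 𝓑}. -/
def tau (g : X ≃ᵢ X) (𝓑 : Set (Set X)) : Set (X ≃ᵢ X) :=
  {g' | ∀ B ∈ 𝓑, g' '' B = g '' B}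

/-- 𝓑' strengthens 𝓑 iff τ(Id,𝓑') ⊆ τ(Id,𝓑). -/
def Strengthens (𝓑' 𝓑 : Set (Set X)) : Prop :=
  tau (1 : X ≃ᵢ X) 𝓑' ⊆ tau (1 : X ≃ᵢ X) 𝓑

/-- 𝒪^𝓑(C) = {g[C] : g ∈ τ(Id,𝓑)}. -/
def orb (𝓑 : Set (Set X)) (C : Set X) : Set (Set X) :=
  (fun g : X ≃ᵢ X => g '' C) '' tau (1 : X ≃ᵢ X) 𝓑

/-- A ball `C` is 𝓑-extremal in `X` if 𝒪^𝓑(C) is infinite or a singleton. -/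
def Extremal (𝓑 : Set (Set X)) (C : Set X) : Prop :=
  (orb 𝓑 C).Infinite ∨ ∃ D, orb 𝓑 C = {D}

/-- `X` has the 𝓑-extremality property if every ball in `X` is 𝓑-extremal in `X`. -/
def ExtremalityProperty (X : Type*) [MetricSpace X] (𝓑 : Set (Set X)) : Prop :=
  ∀ C : Set X, IsBall C → Extremal 𝓑 C

/-- `C` is a ball of radius `r` which is r-maximal 𝓑-non-extremal in `X`:
`C` is 𝓑-non-extremal and every ball of radius `r' > r` containing `C` is 𝓑-extremal. -/
def RMaxNonExtremalRad (𝓑 : Set (Set X)) (C : Set X) (r : ℝ) : Prop :=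
  IsBallRad C r ∧ ¬ Extremal 𝓑 C ∧
  ∀ (C' : Set X) (r' : ℝ), r < r' → IsBallRad C' r' → C ⊆ C' → Extremal 𝓑 C'

/-- `C` is r-maximal 𝓑-non-extremal in `X` (for some radius of `C`). -/
def RMaxNonExtremal (𝓑 : Set (Set X)) (C : Set X) : Prop :=
  ∃ r, RMaxNonExtremalRad 𝓑 C r

/-- Distance between two subsets of `X`. -/
noncomputable def setDist (A B : Set X) : ℝ :=
  sInf ((fun p : X × X => dist p.1 p.2) '' A ×ˢ B)

/-- Two subsets are similar if some isometry of `X` maps one onto the other. -/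
def Similar (A B : Set X) : Prop := ∃ g : X ≃ᵢ X, g '' A = B

/-- `[B]` for a ball `B` of radius `r`: `B` together with all balls `B'` of radius `r`
similar to `B` with `dist(B,B') = r`. -/
def ballClass (B : Set X) (r : ℝ) : Set (Set X) :=
  insert B {B' | (∃ x : X, B' = Metric.ball x r) ∧ Similar B B' ∧ setDist B B' = r}

/-- `g` permutes a finite set `Z`. -/
def PermutesSet (g : X ≃ᵢ X) (Z : Set X) : Prop := g '' Z = Z

/-- `g` permutes an FD family 𝓑. -/
def PermutesFam (g : X ≃ᵢ X) (𝓑 : Set (Set X)) : Prop :=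
  (fun B => g '' B) '' 𝓑 = 𝓑

/-- The topology of pointwise convergence on the isometry group of `X`. -/
instance isoTopology (X : Type*) [PseudoEMetricSpace X] : TopologicalSpace (X ≃ᵢ X) :=
  TopologicalSpace.induced (fun g => (g : X → X)) Pi.topologicalSpace

/-- A topological group has ample generics if each diagonal conjugation action
on `G^(n+1)` has a comeager orbit. -/
def HasAmpleGenerics (G : Type*) [Group G] [TopologicalSpace G] : Prop :=
  ∀ n : ℕ, ∃ v : Fin (n + 1) → G,
    {w : Fin (n + 1) → G | ∃ g : G, ∀ i, w i = g * v i * g⁻¹} ∈ residual (Fin (n + 1) → G)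

end UltraGen


namespace UltraGen

variable {X : Type*} [MetricSpace X] [IsUltrametricDist X]

set_option linter.unusedSectionVars false

/-! ### Ultrametric preliminaries and swaps -/

lemma dist_eq_of_lt {x y z : X} (h : dist x y < dist y z) : dist x z = dist y z := by
  have h1 := dist_triangle_max x y z
  have h2 := dist_triangle_max y x z
  rw [dist_comm y x] at h2
  apply le_antisymm
  · exact h1.trans (max_le h.le le_rfl)
  · rcases le_max_iff.1 h2 with h3 | h3
    · exact absurd h3 (not_le.2 h)
    · exact h3

lemma dist_lt_of_lt {x y z : X} {r : ℝ} (h1 : dist x y < r) (h2 : dist y z < r) :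
    dist x z < r :=
  (dist_triangle_max x y z).trans_lt (max_lt h1 h2)

lemma dist_le_of_le {x y z : X} {r : ℝ} (h1 : dist x y ≤ r) (h2 : dist y z ≤ r) :
    dist x z ≤ r :=
  (dist_triangle_max x y z).trans (max_le h1 h2)

lemma dist_inv (k : X ≃ᵢ X) (x y : X) : dist (k⁻¹ x) y = dist x (k y) := by
  rw [← k.dist_eq (k⁻¹ x) y, IsometryEquiv.apply_inv_self]

/-- If `t = dist y (k y)` then exchanging the balls of radius `t` about `y` and `k y` by means of
`k` and `k⁻¹`, and fixing everything else, is an isometry. -/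
lemma exists_swap (k : X ≃ᵢ X) (y : X) : ∃ σ : X ≃ᵢ X, σ y = k y ∧
    (∀ x, dist x y < dist y (k y) → σ x = k x) ∧
    (∀ x, dist x (k y) < dist y (k y) → σ x = k⁻¹ x) ∧
    (∀ x, dist y (k y) ≤ dist x y → dist y (k y) ≤ dist x (k y) → σ x = x) := by
  classical
  set t := dist y (k y) with ht
  let f : X → X := fun x => if dist x y < t then k x else if dist x (k y) < t then k⁻¹ x else x
  have f1 : ∀ x, dist x y < t → f x = k x := fun x h => by simp [f, h]
  have hdisj : ∀ x, dist x (k y) < t → ¬ dist x y < t := fun x h h' => by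
    rw [dist_comm] at h'
    exact absurd (dist_lt_of_lt h' h) (by rw [← ht]; exact lt_irrefl _)
  have f2 : ∀ x, dist x (k y) < t → f x = k⁻¹ x := fun x h => by simp [f, h, hdisj x h]
  have f3 : ∀ x, t ≤ dist x y → t ≤ dist x (k y) → f x = x := fun x h h' => by
    simp [f, not_lt.2 h, not_lt.2 h']
  have g1 : ∀ x, dist x y < t → dist (f x) (k y) < t := fun x h => by
    rw [f1 x h, k.dist_eq]; exact h
  have g2 : ∀ x, dist x (k y) < t → dist (f x) y < t := fun x h => by
    rw [f2 x h, dist_inv]; exact h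
  have hcross : ∀ a b, dist a y < t → dist b (k y) < t → dist a b = t := fun a b ha hb => by
    have h1 : dist a (k y) = t := by rw [ht]; exact dist_eq_of_lt (by rw [← ht]; exact ha)
    rw [dist_comm a b, dist_eq_of_lt (y := k y) (by rw [dist_comm (k y), h1]; exact hb),
      dist_comm, h1]
  have hout : ∀ a b, dist a y < t → t ≤ dist b y → t ≤ dist b (k y) →
      dist (f a) b = dist a b := fun a b ha hb hb' => by
    have e1 : dist a b = dist y b :=
      dist_eq_of_lt (ha.trans_le (by rw [dist_comm]; exact hb))
    have e2 : dist (f a) b = dist (k y) b :=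
      dist_eq_of_lt ((g1 a ha).trans_le (by rw [dist_comm]; exact hb'))
    rw [e1, e2]
    apply le_antisymm
    · exact dist_le_of_le (by rw [dist_comm, ← ht, dist_comm y]; exact hb) le_rfl
    · exact dist_le_of_le (by rw [← ht, dist_comm]; exact hb') le_rfl
  have hout' : ∀ a b, dist a (k y) < t → t ≤ dist b y → t ≤ dist b (k y) →
      dist (f a) b = dist a b := fun a b ha hb hb' => by
    have e1 : dist a b = dist (k y) b :=
      dist_eq_of_lt (ha.trans_le (by rw [dist_comm]; exact hb'))
    have e2 : dist (f a) b = dist y b :=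
      dist_eq_of_lt ((g2 a ha).trans_le (by rw [dist_comm]; exact hb))
    rw [e1, e2]
    apply le_antisymm
    · exact dist_le_of_le (by rw [← ht, dist_comm]; exact hb') le_rfl
    · exact dist_le_of_le (by rw [dist_comm, ← ht, dist_comm y]; exact hb) le_rfl
  have hinv : ∀ x, f (f x) = x := fun x => by
    by_cases h : dist x y < t
    · rw [f2 _ (g1 x h), f1 x h, IsometryEquiv.inv_apply_self]
    · by_cases h' : dist x (k y) < t
      · rw [f1 _ (g2 x h'), f2 x h', IsometryEquiv.apply_inv_self]
      · rw [f3 x (not_lt.1 h) (not_lt.1 h'), f3 x (not_lt.1 h) (not_lt.1 h')]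
  have hiso : ∀ a b, dist (f a) (f b) = dist a b := fun a b => by
    by_cases ha : dist a y < t
    · by_cases hb : dist b y < t
      · rw [f1 a ha, f1 b hb, k.dist_eq]
      · by_cases hb' : dist b (k y) < t
        · rw [hcross a b ha hb', dist_comm, hcross _ _ (g2 b hb') (g1 a ha)]
        · rw [f3 b (not_lt.1 hb) (not_lt.1 hb'), hout a b ha (not_lt.1 hb) (not_lt.1 hb')]
    · by_cases ha' : dist a (k y) < t
      · by_cases hb : dist b y < t
        · rw [dist_comm a b, hcross b a hb ha', hcross _ _ (g2 a ha') (g1 b hb)]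
        · by_cases hb' : dist b (k y) < t
          · rw [f2 a ha', f2 b hb', IsometryEquiv.dist_eq]
          · rw [f3 b (not_lt.1 hb) (not_lt.1 hb'), hout' a b ha' (not_lt.1 hb) (not_lt.1 hb')]
      · rw [f3 a (not_lt.1 ha) (not_lt.1 ha')]
        by_cases hb : dist b y < t
        · rw [dist_comm, hout b a hb (not_lt.1 ha) (not_lt.1 ha'), dist_comm]
        · by_cases hb' : dist b (k y) < t
          · rw [dist_comm, hout' b a hb' (not_lt.1 ha) (not_lt.1 ha'), dist_comm]
          · rw [f3 b (not_lt.1 hb) (not_lt.1 hb')]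
  refine ⟨⟨⟨f, f, hinv, hinv⟩, Isometry.of_dist_eq hiso⟩, ?_, f1, f2, f3⟩
  change f y = k y
  by_cases h0 : 0 < t
  · exact f1 y (by simpa using h0)
  · have h1 : y = k y := dist_le_zero.1 (not_lt.1 h0)
    rw [f3 y (by simpa using not_lt.1 h0) (by rw [← ht])]
    exact h1

/-- The swap of `exists_swap`, together with the consequences used below: it acts at each point as
`k`, `k⁻¹` or the identity, moves no point further than `dist y (k y)`, and fixes every point
equidistant from `y` and `k y`. -/
lemma exists_swap' (k : X ≃ᵢ X) (y : X) : ∃ σ : X ≃ᵢ X, σ y = k y ∧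
    (∀ x, σ x = x ∨ σ x = k x ∨ σ x = k⁻¹ x) ∧
    (∀ x, dist (σ x) x ≤ dist y (k y)) ∧
    (∀ x, dist x y = dist x (k y) → σ x = x) := by
  obtain ⟨σ, h0, h1, h2, h3⟩ := exists_swap k y
  refine ⟨σ, h0, fun x => ?_, fun x => ?_, fun x hx => ?_⟩
  · by_cases h : dist x y < dist y (k y)
    · exact Or.inr (Or.inl (h1 x h))
    · by_cases h' : dist x (k y) < dist y (k y)
      · exact Or.inr (Or.inr (h2 x h'))
      · exact Or.inl (h3 x (not_lt.1 h) (not_lt.1 h'))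
  · by_cases h : dist x y < dist y (k y)
    · rw [h1 x h]
      refine dist_le_of_le (y := k y) (by rw [k.dist_eq]; exact h.le) ?_
      rw [dist_comm]
      exact dist_le_of_le h.le le_rfl
    · by_cases h' : dist x (k y) < dist y (k y)
      · rw [h2 x h']
        refine dist_le_of_le (y := y) (by rw [dist_inv]; exact h'.le) ?_
        exact dist_le_of_le (y := k y) le_rfl (by rw [dist_comm]; exact h'.le)
      · rw [h3 x (not_lt.1 h) (not_lt.1 h'), dist_self]; exact dist_nonneg
  · have h4 : dist y (k y) ≤ dist x y :=
      dist_le_of_le (y := x) (by rw [dist_comm]) (by rw [hx])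
    exact h3 x h4 (hx ▸ h4)

/-! ### Homogeneity -/

/-- A group of isometries is local if it contains every isometry that acts at each point as
the identity, `k` or `k⁻¹`, for some fixed `k` in the group. Such groups are closed under the swaps
of `exists_swap`. -/
def LocalGroup (Γ : Subgroup (X ≃ᵢ X)) : Prop :=
  ∀ k ∈ Γ, ∀ σ : X ≃ᵢ X, (∀ x, σ x = x ∨ σ x = k x ∨ σ x = k⁻¹ x) → σ ∈ Γ

/-- The extension step of homogeneity: `h ∈ Γ` can be altered, without changing it on `S`, so as to
send `c` to a prescribed point `k c` of its orbit, provided that distances to `S` agree. -/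
lemma LocalGroup.extend_one {Γ : Subgroup (X ≃ᵢ X)} (hΓ : LocalGroup Γ) {h k : X ≃ᵢ X}
    (hh : h ∈ Γ) (hk : k ∈ Γ) (c : X) (S : Finset X)
    (hS : ∀ z ∈ S, dist (h z) (k c) = dist z c) :
    ∃ h' ∈ Γ, h' c = k c ∧ ∀ z ∈ S, h' z = h z := by
  obtain ⟨σ, h0, h1, -, h3⟩ := exists_swap' (k * h⁻¹) (h c)
  have e : (k * h⁻¹) (h c) = k c := by
    rw [IsometryEquiv.mul_apply, IsometryEquiv.inv_apply_self]
  rw [e] at h0 h3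
  refine ⟨σ * h, Γ.mul_mem (hΓ _ (Γ.mul_mem hk (Γ.inv_mem hh)) σ h1) hh, ?_, fun z hz => ?_⟩
  · rw [IsometryEquiv.mul_apply, h0]
  · rw [IsometryEquiv.mul_apply]
    exact h3 _ (by rw [h.dist_eq, hS z hz])

/-- A finite partial isometry which moves each point within its `Γ`-orbit extends to an element
of the local group `Γ`. -/
lemma LocalGroup.extend {Γ : Subgroup (X ≃ᵢ X)} (hΓ : LocalGroup Γ) (F : Finset X) (f : X → X)
    (hf : ∀ x ∈ F, ∃ k ∈ Γ, k x = f x) (hd : ∀ x ∈ F, ∀ y ∈ F, dist (f x) (f y) = dist x y) :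
    ∃ g ∈ Γ, ∀ x ∈ F, g x = f x := by
  classical
  induction F using Finset.induction_on with
  | empty => exact ⟨1, Γ.one_mem, by simp⟩
  | insert c F hc ih =>
    obtain ⟨h, hh, hhF⟩ := ih (fun x hx => hf x (Finset.mem_insert_of_mem hx))
      (fun x hx y hy => hd x (Finset.mem_insert_of_mem hx) y (Finset.mem_insert_of_mem hy))
    obtain ⟨k, hk, hkc⟩ := hf c (Finset.mem_insert_self _ _)
    obtain ⟨g, hg, hgc, hgF⟩ := hΓ.extend_one hh hk c F (fun z hz => by
      rw [hhF z hz, hkc]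
      exact hd z (Finset.mem_insert_of_mem hz) c (Finset.mem_insert_self _ _))
    refine ⟨g, hg, fun x hx => ?_⟩
    rcases Finset.mem_insert.1 hx with rfl | hx
    · rw [hgc, hkc]
    · rw [hgF x hx, hhF x hx]

lemma localGroup_top : LocalGroup (⊤ : Subgroup (X ≃ᵢ X)) := fun _ _ _ _ => Subgroup.mem_top _

/-- The group of isometries preserving the set `S`. -/
def setStab (S : Set X) : Subgroup (X ≃ᵢ X) where
  carrier := {k | ∀ x, k x ∈ S ↔ x ∈ S}
  mul_mem' := fun {a b} ha hb x => by rw [IsometryEquiv.mul_apply, ha, hb]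
  one_mem' := fun x => Iff.rfl
  inv_mem' := fun {a} ha x => by rw [← ha, IsometryEquiv.apply_inv_self]

lemma localGroup_setStab (S : Set X) : LocalGroup (setStab S) := by
  intro k hk σ hσ x
  rcases hσ x with h | h | h
  · rw [h]
  · rw [h]; exact hk x
  · rw [h]; exact (setStab S).inv_mem hk x

/-! ### Finite invariant sets -/

lemma exists_rep (R : Setoid X) : ∃ o : X → X, (∀ x, R (o x) x) ∧ ∀ x y, R x y → o x = o y :=
  ⟨fun x => (Quotient.mk R x).out, fun x => Quotient.mk_out x, fun x y h => by
    have : Quotient.mk R x = Quotient.mk R y := Quotient.sound h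
    simp only [this]⟩

/-- The relation of lying in a common ball of radius `s'`. -/
def ballSetoid (X : Type*) [MetricSpace X] [IsUltrametricDist X] (s' : ℝ) (h : 0 < s') :
    Setoid X where
  r x y := dist x y < s'
  iseqv := ⟨fun x => by simpa using h, fun {x y} h => by rw [dist_comm]; exact h,
    fun {x y z} h1 h2 => dist_lt_of_lt h1 h2⟩

/-- Conjugacy of points up to distance `< s'`. -/
def typeSetoid (X : Type*) [MetricSpace X] [IsUltrametricDist X] (s' : ℝ) (h : 0 < s') :
    Setoid X where
  r x y := ∃ k : X ≃ᵢ X, dist (k x) y < s'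
  iseqv := ⟨fun x => ⟨1, by simpa using h⟩,
    fun {x y} ⟨k, h⟩ => ⟨k⁻¹, by rw [dist_inv, dist_comm]; exact h⟩,
    fun {x y z} ⟨k, h1⟩ ⟨l, h2⟩ => ⟨l * k, dist_lt_of_lt (y := l y) (by
      rw [IsometryEquiv.mul_apply, l.dist_eq]; exact h1) h2⟩⟩

/-- Conjugacy of points up to distance `≤ s`. -/
def closedTypeSetoid (X : Type*) [MetricSpace X] [IsUltrametricDist X] (s : ℝ) (h : 0 ≤ s) :
    Setoid X where
  r x y := ∃ k : X ≃ᵢ X, dist (k x) y ≤ s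
  iseqv := ⟨fun x => ⟨1, by simpa using h⟩,
    fun {x y} ⟨k, h⟩ => ⟨k⁻¹, by rw [dist_inv, dist_comm]; exact h⟩,
    fun {x y z} ⟨k, h1⟩ ⟨l, h2⟩ => ⟨l * k, dist_le_of_le (y := l y) (by
      rw [IsometryEquiv.mul_apply, l.dist_eq]; exact h1) h2⟩⟩

/-- Coherent charts: each ball of radius `s'` is carried by an isometry `j` into a
standard ball depending only on its conjugacy type, in such a way that points of `F` that are
conjugate up to distance `s` are carried to within distance `s` of each other. -/
lemma exists_charts {s s' : ℝ} (hs : 0 ≤ s) (hss : s < s') (F : Finset X)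
    (hF : ∀ f ∈ F, ∀ g ∈ F, dist f g < s' → dist f g ≤ s) :
    ∃ j : X → (X ≃ᵢ X), (∀ x y, dist x y < s' → j x = j y) ∧
      (∀ x y, (∃ k : X ≃ᵢ X, dist (k x) y < s') → dist (j x x) (j y y) < s') ∧
      ∀ f ∈ F, ∀ g ∈ F, (∃ k : X ≃ᵢ X, dist (k f) g ≤ s) → dist (j f f) (j g g) ≤ s := by
  classical
  have hs' : 0 < s' := hs.trans_lt hss
  obtain ⟨κ₀, hκ₀, hκ₀'⟩ := exists_rep (ballSetoid X s' hs')
  obtain ⟨r, hr, hr'⟩ := exists_rep (typeSetoid X s' hs')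
  obtain ⟨o, ho, ho'⟩ := exists_rep (closedTypeSetoid X s hs)
  -- representatives of balls, chosen in `F` where possible
  have hκ1 : ∀ y, ∃ z, dist z y < s' ∧ ((∃ f ∈ F, dist f y < s') → z ∈ F) := fun y => by
    by_cases h : ∃ f ∈ F, dist f y < s'
    · obtain ⟨f, hf, hfy⟩ := h
      exact ⟨f, hfy, fun _ => hf⟩
    · exact ⟨y, by simpa using hs', fun h' => absurd h' h⟩
  choose κ₁ hκ₁ hκ₁' using hκ1
  let κ : X → X := fun x => κ₁ (κ₀ x)
  have hκ : ∀ x, dist (κ x) x < s' := fun x => dist_lt_of_lt (hκ₁ _) (hκ₀ x)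
  have hκκ : ∀ x y, dist x y < s' → κ x = κ y := fun x y h => by
    simp only [κ]; rw [hκ₀' x y h]
  have hκF : ∀ f ∈ F, dist (κ f) f ≤ s := fun f hf => by
    refine hF _ (hκ₁' _ ⟨f, hf, ?_⟩) _ hf (hκ f)
    rw [dist_comm]; exact hκ₀ f
  choose kk hkk using hr
  let A : X → X := fun x => (kk (o x))⁻¹ (o x)
  have hAr : ∀ x, dist (A x) (r (o x)) < s' := fun x => by
    simp only [A]; rw [dist_inv, dist_comm]; exact hkk (o x)
  have hror : ∀ x, r (o x) = r x := fun x => by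
    obtain ⟨k, hk⟩ := ho x
    exact hr' _ _ ⟨k, hk.trans_lt hss⟩
  have hj : ∀ x, ∃ k : X ≃ᵢ X, dist (k x) (A x) ≤ s := fun x => by
    obtain ⟨k, hk⟩ := ho x
    refine ⟨(kk (o x))⁻¹ * k⁻¹, ?_⟩
    simp only [A]
    rw [IsometryEquiv.mul_apply, IsometryEquiv.dist_eq, dist_inv, dist_comm]
    exact hk
  choose j₀ hj₀ using hj
  have hjA : ∀ x, dist (j₀ (κ x) x) (r x) < s' := fun x => by
    have h1 : dist (j₀ (κ x) x) (j₀ (κ x) (κ x)) < s' := by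
      rw [IsometryEquiv.dist_eq, dist_comm]; exact hκ x
    have h2 : r (κ x) = r x := hr' _ _ ⟨1, hκ x⟩
    have h3 := hAr (κ x)
    rw [hror, h2] at h3
    exact dist_lt_of_lt (dist_lt_of_lt h1 ((hj₀ (κ x)).trans_lt hss)) h3
  have hjF : ∀ f ∈ F, dist (j₀ (κ f) f) (A f) ≤ s := fun f hf => by
    have h1 : dist (j₀ (κ f) f) (j₀ (κ f) (κ f)) ≤ s := by
      rw [IsometryEquiv.dist_eq, dist_comm]; exact hκF f hf
    have h2 : A (κ f) = A f := by
      have : o (κ f) = o f := ho' _ _ ⟨1, hκF f hf⟩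
      simp only [A, this]
    rw [← h2]
    exact dist_le_of_le h1 (hj₀ _)
  refine ⟨fun x => j₀ (κ x), fun x y h => by simp only [hκκ x y h], fun x y h => ?_,
    fun f hf g hg h => ?_⟩
  · have h1 := hjA y
    rw [dist_comm, ← hr' x y h] at h1
    exact dist_lt_of_lt (hjA x) h1
  · have h1 := hjF g hg
    have h2 : A f = A g := by
      have : o f = o g := ho' _ _ h
      simp only [A, this]
    rw [dist_comm, ← h2] at h1
    exact dist_le_of_le (hjF f hf) h1

/-- Lying in a common ball of radius `s`, or being equal when `s = 0`. -/
def Near (s : ℝ) (x y : X) : Prop := x = y ∨ dist x y < s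

/-- The union of the balls of radius `s` about the points of `Z`, which is `Z` itself when
`s = 0`. -/
def nbhdSet (s : ℝ) (Z : Finset X) : Set X := {v | ∃ z ∈ Z, Near s z v}

/-- `Z` is `s`-good if points of `Z` that are conjugate up to `Near s` are so by an
isometry which preserves the union of the balls of radius `s` that meet `Z`. -/
def Good (s : ℝ) (Z : Finset X) : Prop :=
  ∀ x ∈ Z, ∀ y ∈ Z, (∃ k : X ≃ᵢ X, Near s (k x) y) →
    ∃ k ∈ setStab (nbhdSet s Z), Near s (k x) y

lemma near_iff {s : ℝ} (hs : 0 < s) {x y : X} : Near s x y ↔ dist x y < s :=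
  ⟨fun h => h.elim (fun h => by rw [h, dist_self]; exact hs) id, Or.inr⟩

lemma Near.dist_le {s : ℝ} (hs : 0 ≤ s) {x y : X} (h : Near s x y) : dist x y ≤ s :=
  h.elim (fun h => by rw [h, dist_self]; exact hs) le_of_lt

lemma setStab_le_nbhdSet (s : ℝ) (Z : Finset X) :
    setStab (Z : Set X) ≤ setStab (nbhdSet s Z) := by
  have key : ∀ m ∈ setStab (Z : Set X), ∀ x ∈ nbhdSet s Z, m x ∈ nbhdSet s Z := by
    rintro m hm x ⟨z, hz, h⟩
    refine ⟨m z, (hm z).2 hz, ?_⟩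
    rcases h with rfl | h
    · exact Or.inl rfl
    · exact Or.inr (by rw [m.dist_eq]; exact h)
  intro m hm x
  refine ⟨fun h => ?_, key m hm x⟩
  have := key m⁻¹ (Subgroup.inv_mem _ hm) _ h
  rwa [IsometryEquiv.inv_apply_self] at this

/-- Refinement of a good set from scale `s'` to the next smaller distance `s` of `F`. Each ball of
radius `s'` meeting `Z'` receives, through the charts of `exists_charts`, a copy of every point of `F`
that lies in a ball of the same conjugacy type. An isometry preserving the balls that meet `Z'` is
corrected by the charts to preserve the copies. -/
lemma good_step {s s' : ℝ} (hs : 0 ≤ s) (hss : s < s') (F Z' : Finset X) (hFZ : F ⊆ Z')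
    (hZ' : Good s' Z') (hF : ∀ f ∈ F, ∀ g ∈ F, dist f g < s' → dist f g ≤ s) :
    ∃ Z : Finset X, F ⊆ Z ∧ Good s Z := by
  classical
  have hs' : 0 < s' := hs.trans_lt hss
  obtain ⟨j, j1, j2, j3⟩ := exists_charts hs hss F hF
  have hfin : {p : X | (∃ z ∈ Z', dist p z < s') ∧ ∃ f ∈ F, j p p = j f f}.Finite := by
    refine ((Z' ×ˢ F).image (fun q => (j q.1)⁻¹ (j q.2 q.2))).finite_toSet.subset ?_
    rintro p ⟨⟨z, hz, hpz⟩, f, hf, h⟩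
    refine Finset.mem_coe.2 (Finset.mem_image.2 ⟨(z, f), Finset.mk_mem_product hz hf, ?_⟩)
    simp only
    rw [← h, j1 p z hpz, IsometryEquiv.inv_apply_self]
  have hmemZ : ∀ p, p ∈ hfin.toFinset ↔ (∃ z ∈ Z', dist p z < s') ∧ ∃ f ∈ F, j p p = j f f :=
    fun p => by simp
  have hN : ∀ v, v ∈ nbhdSet s' Z' ↔ ∃ z ∈ Z', dist v z < s' := fun v => by
    simp only [nbhdSet, near_iff hs', dist_comm v, mem_ofPred_eq]
  have hNball : ∀ v w, dist v w < s' → v ∈ nbhdSet s' Z' → w ∈ nbhdSet s' Z' := fun v w h hv => by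
    rw [hN] at hv ⊢
    obtain ⟨z, hz, hd⟩ := hv
    exact ⟨z, hz, dist_lt_of_lt (by rw [dist_comm]; exact h) hd⟩
  refine ⟨hfin.toFinset, fun f hf => ?_, ?_⟩
  · rw [hmemZ]
    exact ⟨⟨f, hFZ hf, by simpa using hs'⟩, f, hf, rfl⟩
  rintro x hx y hy ⟨k, hk⟩
  have hx' := (hmemZ x).1 hx
  have hy' := (hmemZ y).1 hy
  have hk' : dist (k x) y < s' := (hk.dist_le hs).trans_lt hss
  obtain ⟨⟨zx, hzx, hxz⟩, f, hf, hxf⟩ := hx'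
  obtain ⟨⟨zy, hzy, hyz⟩, g, hg, hyg⟩ := hy'
  obtain ⟨m0, hm0, hm0xy⟩ := hZ' zx hzx zy hzy ⟨k, Or.inr (dist_lt_of_lt (y := k x)
    (by rw [k.dist_eq, dist_comm]; exact hxz) (dist_lt_of_lt hk' hyz))⟩
  rw [near_iff hs'] at hm0xy
  have hm0x : dist (m0 x) y < s' := by
    refine dist_lt_of_lt (y := m0 zx) (by rw [m0.dist_eq]; exact hxz)
      (dist_lt_of_lt hm0xy (by rw [dist_comm]; exact hyz))
  let mf : X → X := fun v => if v ∈ nbhdSet s' Z' then (j (m0 v))⁻¹ (j v v) else m0 v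
  have mf1 : ∀ v, v ∈ nbhdSet s' Z' → mf v = (j (m0 v))⁻¹ (j v v) := fun v h => by simp [mf, h]
  have mf2 : ∀ v, v ∉ nbhdSet s' Z' → mf v = m0 v := fun v h => by simp [mf, h]
  have hmf : ∀ v, dist (mf v) (m0 v) < s' := fun v => by
    by_cases h : v ∈ nbhdSet s' Z'
    · rw [mf1 v h, dist_inv]
      exact j2 _ _ ⟨m0, by simpa using hs'⟩
    · rw [mf2 v h, dist_self]; exact hs'
  have hiso : ∀ v w, dist (mf v) (mf w) = dist v w := fun v w => by
    by_cases h : dist v w < s'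
    · by_cases hv : v ∈ nbhdSet s' Z'
      · have hw := hNball v w h hv
        rw [mf1 v hv, mf1 w hw, j1 v w h, j1 (m0 v) (m0 w) (by rw [m0.dist_eq]; exact h),
          IsometryEquiv.dist_eq, IsometryEquiv.dist_eq]
      · have hw : w ∉ nbhdSet s' Z' := fun hw => hv (hNball w v (by rw [dist_comm]; exact h) hw)
        rw [mf2 v hv, mf2 w hw, m0.dist_eq]
    · have h' : s' ≤ dist (m0 v) (m0 w) := by rw [m0.dist_eq]; exact not_lt.1 h
      have e1 : dist (mf v) (m0 w) = dist (m0 v) (m0 w) := dist_eq_of_lt ((hmf v).trans_le h')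
      have e2 : dist (mf w) (mf v) = dist (m0 w) (mf v) :=
        dist_eq_of_lt (by rw [dist_comm (m0 w), e1]; exact (hmf w).trans_le h')
      rw [dist_comm, e2, dist_comm, e1, m0.dist_eq]
  have hsurj : Function.Surjective mf := fun w => by
    by_cases hw : w ∈ nbhdSet s' Z'
    · obtain ⟨v0, hv0⟩ : ∃ v0, m0 v0 = w := ⟨m0⁻¹ w, IsometryEquiv.apply_inv_self _ _⟩
      have hv0N : v0 ∈ nbhdSet s' Z' := by rw [← hm0 v0, hv0]; exact hw
      have hvv : dist ((j v0)⁻¹ (j w w)) v0 < s' := by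
        rw [dist_inv]
        exact j2 _ _ ⟨m0⁻¹, by rw [dist_inv, hv0, dist_self]; exact hs'⟩
      refine ⟨(j v0)⁻¹ (j w w), ?_⟩
      rw [mf1 _ (hNball _ _ (by rw [dist_comm]; exact hvv) hv0N), j1 _ _ hvv,
        j1 (m0 ((j v0)⁻¹ (j w w))) w (by rw [← hv0, m0.dist_eq, hv0]; exact hvv),
        IsometryEquiv.apply_inv_self, IsometryEquiv.inv_apply_self]
    · refine ⟨m0⁻¹ w, ?_⟩
      rw [mf2, IsometryEquiv.apply_inv_self]
      rw [← hm0, IsometryEquiv.apply_inv_self]; exact hw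
  let m : X ≃ᵢ X := IsometryEquiv.mk (Equiv.ofBijective mf
    ⟨(Isometry.of_dist_eq hiso).injective, hsurj⟩) (Isometry.of_dist_eq hiso)
  have hm : ∀ v, m v = mf v := fun v => rfl
  have hmN : ∀ v, m v ∈ nbhdSet s' Z' ↔ v ∈ nbhdSet s' Z' := fun v => by
    rw [← hm0 v, hm]
    exact ⟨hNball _ _ (hmf v), hNball _ _ (by rw [dist_comm]; exact hmf v)⟩
  have hmj : ∀ v, v ∈ nbhdSet s' Z' → j (m v) (m v) = j v v := fun v hv => by
    rw [hm, j1 _ _ (hmf v), mf1 v hv, IsometryEquiv.apply_inv_self]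
  have hmZ : m ∈ setStab (hfin.toFinset : Set X) := fun v => by
    rw [Finset.mem_coe, Finset.mem_coe, hmemZ, hmemZ, ← hN, ← hN, hmN]
    refine and_congr_right fun hv => ?_
    rw [hmj v hv]
  have hmZs := setStab_le_nbhdSet s _ hmZ
  have hxN : x ∈ nbhdSet s' Z' := (hN x).2 ⟨zx, hzx, hxz⟩
  have hmxy' : dist (m x) y < s' := dist_lt_of_lt (hmf x) hm0x
  have hmxy : dist (m x) y ≤ s := by
    rw [← (j y).dist_eq]
    have h1 := hmj x hxN
    rw [j1 _ _ hmxy'] at h1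
    rw [h1, hxf, hyg]
    refine j3 f hf g hg ⟨(j g)⁻¹ * j y * k * (j x)⁻¹ * j f, ?_⟩
    simp only [IsometryEquiv.mul_apply]
    rw [dist_inv, ← hxf, ← hyg, IsometryEquiv.inv_apply_self, IsometryEquiv.dist_eq]
    exact hk.dist_le hs
  by_cases hn : Near s (m x) y
  · exact ⟨m, hmZs, hn⟩
  -- the remaining case: `m x` and `k x` lie in distinct balls of radius `s`, which are swapped
  have hsm : s ≤ dist (m x) y := not_lt.1 fun h => hn (Or.inr h)
  have hs0 : 0 < s := by
    rcases hs.lt_or_eq with h | h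
    · exact h
    · exact absurd (Or.inl (dist_le_zero.1 (h ▸ hmxy))) hn
  rw [near_iff hs0] at hk
  have hmk : dist (m x) (k x) = s := by
    have h1 : dist (k x) (m x) = dist y (m x) :=
      dist_eq_of_lt (hk.trans_le (by rw [dist_comm]; exact hsm))
    rw [dist_comm, h1, dist_comm]; exact le_antisymm hmxy hsm
  obtain ⟨σ, σ0, σ1, σ2, σ3⟩ := exists_swap (k * m⁻¹) (m x)
  have e : (k * m⁻¹) (m x) = k x := by
    rw [IsometryEquiv.mul_apply, IsometryEquiv.inv_apply_self]
  rw [e, hmk] at σ1 σ2 σ3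
  rw [e] at σ0
  have hmxZ : m x ∈ hfin.toFinset := (hmZ x).2 hx
  have hσ : σ ∈ setStab (nbhdSet s hfin.toFinset) := by
    intro v
    by_cases h1 : dist v (m x) < s
    · have hv : v ∈ nbhdSet s hfin.toFinset := ⟨m x, hmxZ, Or.inr (by rw [dist_comm]; exact h1)⟩
      have hv' : σ v ∈ nbhdSet s hfin.toFinset := by
        refine ⟨y, hy, Or.inr ?_⟩
        rw [dist_comm]
        refine dist_lt_of_lt (y := k x) ?_ hk
        rw [← σ0, σ.dist_eq]; exact h1
      exact iff_of_true hv' hv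
    · by_cases h2 : dist v (k x) < s
      · have hv : v ∈ nbhdSet s hfin.toFinset :=
          ⟨y, hy, Or.inr (by rw [dist_comm]; exact dist_lt_of_lt h2 hk)⟩
        have hv' : σ v ∈ nbhdSet s hfin.toFinset := by
          refine ⟨m x, hmxZ, Or.inr ?_⟩
          rw [dist_comm, σ2 v h2, dist_inv, e]; exact h2
        exact iff_of_true hv' hv
      · rw [σ3 v (not_lt.1 h1) (not_lt.1 h2)]
  refine ⟨σ * m, Subgroup.mul_mem _ hσ hmZs, Or.inr ?_⟩
  rw [IsometryEquiv.mul_apply, σ0]; exact hk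

/-- Every finite set is contained in a finite set `Z` such that conjugate points of `Z` are
conjugate by an isometry preserving `Z`. -/
lemma exists_good (F : Finset X) : ∃ Z : Finset X, F ⊆ Z ∧
    ∀ x ∈ Z, ∀ y ∈ Z, (∃ k : X ≃ᵢ X, k x = y) → ∃ k ∈ setStab (Z : Set X), k x = y := by
  classical
  let Δ : Finset ℝ := insert 0 ((F ×ˢ F).image fun p => dist p.1 p.2)
  have hΔ : ∀ f ∈ F, ∀ g ∈ F, dist f g ∈ Δ := fun f hf g hg =>
    Finset.mem_insert_of_mem (Finset.mem_image.2 ⟨(f, g), Finset.mk_mem_product hf hg, rfl⟩)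
  have hΔ0 : ∀ s ∈ Δ, 0 ≤ s := fun s hs => by
    rcases Finset.mem_insert.1 hs with rfl | hs
    · exact le_rfl
    · obtain ⟨p, -, rfl⟩ := Finset.mem_image.1 hs
      exact dist_nonneg
  -- descending induction over the set of distances of `F`
  have key : ∀ N : ℕ, ∀ s ∈ Δ, (Δ.filter (s < ·)).card = N → ∃ Z, F ⊆ Z ∧ Good s Z := by
    intro N
    induction N using Nat.strong_induction_on with
    | _ N ih =>
      intro s hs hN
      by_cases hne : (Δ.filter (s < ·)).Nonempty
      · obtain ⟨s', hs', hmin⟩ := Finset.exists_min_image _ id hne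
        rw [Finset.mem_filter] at hs'
        obtain ⟨Z', hFZ, hZ'⟩ := ih _ (by
          rw [← hN]
          refine Finset.card_lt_card (Finset.ssubset_iff_of_subset ?_ |>.2 ⟨s', ?_, ?_⟩)
          · intro a ha
            rw [Finset.mem_filter] at ha ⊢
            exact ⟨ha.1, hs'.2.trans ha.2⟩
          · exact Finset.mem_filter.2 hs'
          · simp) s' hs'.1 rfl
        refine good_step (hΔ0 s hs) hs'.2 F Z' hFZ hZ' fun f hf g hg h => ?_
        by_contra hlt
        exact absurd (hmin _ (Finset.mem_filter.2 ⟨hΔ f hf g hg, not_le.1 hlt⟩)) (not_le.2 h)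
      · have hle : ∀ f ∈ F, ∀ g ∈ F, dist f g ≤ s := fun f hf g hg => by
          by_contra h
          exact hne ⟨_, Finset.mem_filter.2 ⟨hΔ f hf g hg, not_le.1 h⟩⟩
        have hs0 := hΔ0 s hs
        refine good_step hs0 (lt_add_one s) F F (Finset.Subset.refl _) ?_
          fun f hf g hg _ => hle f hf g hg
        rintro x hx y hy -
        refine ⟨1, Subgroup.one_mem _, Or.inr ?_⟩
        exact (hle x hx y hy).trans_lt (lt_add_one s)
  obtain ⟨Z, hFZ, hZ⟩ := key _ 0 (Finset.mem_insert_self _ _) rfl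
  have hn0 : ∀ x y : X, Near 0 x y ↔ x = y := fun x y =>
    ⟨fun h => h.elim id fun h => absurd h (not_lt.2 dist_nonneg), Or.inl⟩
  have hN0 : nbhdSet 0 Z = (Z : Set X) := by
    ext v; simp [nbhdSet, hn0]
  refine ⟨Z, hFZ, fun x hx y hy ⟨k, hk⟩ => ?_⟩
  obtain ⟨l, hl, hlx⟩ := hZ x hx y hy ⟨k, (hn0 _ _).2 hk⟩
  exact ⟨l, hN0 ▸ hl, (hn0 _ _).1 hlx⟩

/-- A finite tuple of finite partial isometries extends to a tuple of isometries with a common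
finite invariant set. -/
lemma exists_finite_invariant {n : ℕ} (w : Fin (n + 1) → X ≃ᵢ X) (F : Finset X) :
    ∃ (u : Fin (n + 1) → X ≃ᵢ X) (Z : Finset X), F ⊆ Z ∧ (∀ i, ∀ x ∈ F, u i x = w i x) ∧
      ∀ i, ∀ x ∈ Z, u i x ∈ Z := by
  classical
  obtain ⟨Z, hZ, hgood⟩ := exists_good (F ∪ Finset.univ.biUnion fun i => F.image (w i))
  have h1 : F ⊆ Z := Finset.subset_union_left.trans hZ
  have h2 : ∀ i, ∀ x ∈ F, w i x ∈ Z := fun i x hx => hZ (Finset.mem_union_right _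
    (Finset.mem_biUnion.2 ⟨i, Finset.mem_univ _, Finset.mem_image_of_mem _ hx⟩))
  have h3 : ∀ i, ∃ g ∈ setStab (Z : Set X), ∀ x ∈ F, g x = w i x := fun i =>
    (localGroup_setStab _).extend F (w i)
      (fun x hx => hgood x (h1 hx) _ (h2 i x hx) ⟨w i, rfl⟩)
      (fun x _ y _ => (w i).dist_eq x y)
  choose u hu hu' using h3
  exact ⟨u, Z, h1, hu', fun i x hx => (hu i x).2 hx⟩

/-! ### Stabilizers of finite families of balls -/

/-- A pair `(b, r)` with `r > 0`, standing for the ball `ball b r`. -/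
abbrev Ctr (X : Type*) := X × {r : ℝ // 0 < r}

/-- The group of isometries mapping each of the balls `ball b r`, `(b, r) ∈ Β`, onto itself. -/
def ballStab (Β : Finset (Ctr X)) : Subgroup (X ≃ᵢ X) where
  carrier := {k | ∀ p ∈ Β, dist (k p.1) p.1 < p.2}
  mul_mem' := fun {a b} ha hb p hp => by
    rw [IsometryEquiv.mul_apply]
    exact dist_lt_of_lt (y := a p.1) (by rw [a.dist_eq]; exact hb p hp) (ha p hp)
  one_mem' := fun p hp => by
    change dist p.1 p.1 < p.2
    rw [dist_self]; exact p.2.2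
  inv_mem' := fun {a} ha p hp => by
    rw [dist_inv, dist_comm]; exact ha p hp

lemma mem_ballStab {Β : Finset (Ctr X)} {k : X ≃ᵢ X} :
    k ∈ ballStab Β ↔ ∀ p ∈ Β, dist (k p.1) p.1 < p.2 := Iff.rfl

lemma localGroup_ballStab (Β : Finset (Ctr X)) : LocalGroup (ballStab Β) := by
  intro k hk σ hσ p hp
  rcases hσ p.1 with h | h | h
  · rw [h, dist_self]; exact p.2.2
  · rw [h]; exact hk p hp
  · rw [h]; exact (ballStab Β).inv_mem hk p hp

/-- The set of distances by which `ballStab Β` moves the point `c`. -/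
def moves (Β : Finset (Ctr X)) (c : X) : Set ℝ := {t | ∃ k ∈ ballStab Β, dist (k c) c = t}

lemma zero_mem_moves (Β : Finset (Ctr X)) (c : X) : (0 : ℝ) ∈ moves Β c :=
  ⟨1, Subgroup.one_mem _, dist_self c⟩

/-- The elements of `D` which are large with respect to the finite set `Λ`: they exceed
(weakly or strictly) each member of `Λ` that some element of `D` exceeds. -/
def largeElts (Λ : Finset ℝ) (D : Set ℝ) : Set ℝ :=
  {t | t ∈ D ∧ ∀ l ∈ Λ, ((∃ e ∈ D, l ≤ e) → l ≤ t) ∧ ((∃ e ∈ D, l < e) → l < t)}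

lemma largeElts_nonempty (Λ : Finset ℝ) {D : Set ℝ} (hD : D.Nonempty) :
    (largeElts Λ D).Nonempty := by
  classical
  induction Λ using Finset.induction_on with
  | empty => obtain ⟨e, he⟩ := hD; exact ⟨e, he, by simp⟩
  | insert l Λ _ ih =>
    obtain ⟨t, ht, hl⟩ := ih
    have up : ∀ e ∈ D, max t e ∈ D ∧ ∀ l ∈ Λ, ((∃ e ∈ D, l ≤ e) → l ≤ max t e) ∧
        ((∃ e ∈ D, l < e) → l < max t e) := fun e he =>
      ⟨by rcases max_choice t e with h | h <;> rw [h] <;> assumption, fun l' hl' =>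
        ⟨fun h => ((hl l' hl').1 h).trans (le_max_left _ _),
          fun h => ((hl l' hl').2 h).trans_le (le_max_left _ _)⟩⟩
    by_cases h1 : ∃ e ∈ D, l < e
    · obtain ⟨e, he, hle⟩ := h1
      refine ⟨max t e, (up e he).1, fun l' hl' => ?_⟩
      rcases Finset.mem_insert.1 hl' with rfl | hl'
      · exact ⟨fun _ => hle.le.trans (le_max_right _ _), fun _ => hle.trans_le (le_max_right _ _)⟩
      · exact (up e he).2 l' hl'
    · by_cases h2 : ∃ e ∈ D, l ≤ e
      · obtain ⟨e, he, hle⟩ := h2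
        refine ⟨max t e, (up e he).1, fun l' hl' => ?_⟩
        rcases Finset.mem_insert.1 hl' with rfl | hl'
        · exact ⟨fun _ => hle.trans (le_max_right _ _), fun h => absurd h h1⟩
        · exact (up e he).2 l' hl'
      · refine ⟨t, ht, fun l' hl' => ?_⟩
        rcases Finset.mem_insert.1 hl' with rfl | hl'
        · exact ⟨fun h => absurd h h2, fun h => absurd h h1⟩
        · exact hl l' hl'

lemma lt_of_mem_largeElts {Λ : Finset ℝ} {D : Set ℝ} {t l : ℝ} (ht : t ∈ largeElts Λ D)
    (hl : l ∈ Λ) (h : t < l) {e : ℝ} (he : e ∈ D) : e < l := by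
  by_contra h'
  exact absurd ((ht.2 l hl).1 ⟨e, he, not_lt.1 h'⟩) (not_le.2 h)

lemma le_of_mem_largeElts {Λ : Finset ℝ} {D : Set ℝ} {t : ℝ} (ht : t ∈ largeElts Λ D)
    (hl : t ∈ Λ) {e : ℝ} (he : e ∈ D) : e ≤ t := by
  by_contra h'
  exact absurd ((ht.2 t hl).2 ⟨e, he, not_le.1 h'⟩) (lt_irrefl _)

/-- The large elements are determined by the part of `D` above any `l₀ ∈ Λ` below some element
of `D`. -/
lemma largeElts_congr {Λ : Finset ℝ} {D D' : Set ℝ} {l₀ e₀ : ℝ} (hl₀ : l₀ ∈ Λ)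
    (hag : ∀ e, l₀ < e → (e ∈ D ↔ e ∈ D')) (he₀ : e₀ ∈ D) (hle : l₀ < e₀) :
    largeElts Λ D = largeElts Λ D' := by
  have key : ∀ {D D' : Set ℝ}, (∀ e, l₀ < e → (e ∈ D ↔ e ∈ D')) → e₀ ∈ D →
      largeElts Λ D ⊆ largeElts Λ D' := by
    intro D D' hag he₀ t ht
    have hlt : l₀ < t := (ht.2 l₀ hl₀).2 ⟨e₀, he₀, hle⟩
    have tr : ∀ e ∈ D', ∃ e' ∈ D, e ≤ e' := fun e he => by
      by_cases h : l₀ < e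
      · exact ⟨e, (hag e h).2 he, le_rfl⟩
      · exact ⟨e₀, he₀, (not_lt.1 h).trans hle.le⟩
    refine ⟨(hag t hlt).1 ht.1, fun l hl => ⟨fun ⟨e, he, h⟩ => ?_, fun ⟨e, he, h⟩ => ?_⟩⟩
    · obtain ⟨e', he', hee⟩ := tr e he
      exact (ht.2 l hl).1 ⟨e', he', h.trans hee⟩
    · obtain ⟨e', he', hee⟩ := tr e he
      exact (ht.2 l hl).2 ⟨e', he', h.trans_le hee⟩
  exact Subset.antisymm (key hag he₀)
    (key (fun e h => (hag e h).symm) ((hag e₀ hle).1 he₀))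

/-- Nearby points have the same large displacements. -/
lemma mem_moves_of_dist_lt {Β : Finset (Ctr X)} {c c' : X} {e : ℝ} (h : dist c c' < e)
    (he : e ∈ moves Β c) : e ∈ moves Β c' := by
  obtain ⟨k, hk, rfl⟩ := he
  refine ⟨k, hk, ?_⟩
  have h1 : dist (k c') c = dist (k c) c :=
    dist_eq_of_lt (by rw [k.dist_eq, dist_comm]; exact h)
  have h2 : dist c' (k c') = dist c (k c') :=
    dist_eq_of_lt (by rw [dist_comm c (k c'), h1, dist_comm]; exact h)
  rw [dist_comm, h2, dist_comm, h1]

/-- A form of the extremality property in terms of points: whenever `ballStab Β` moves `c` by a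
positive maximal distance `t`, the orbit of `c` meets infinitely many balls of radius `t`. -/
def ExtStar (Β : Finset (Ctr X)) : Prop :=
  ∀ c, ∀ k ∈ ballStab Β, (∀ l ∈ ballStab Β, dist (l c) c ≤ dist (k c) c) → k c ≠ c →
    ∀ W : Finset X, ∃ l ∈ ballStab Β, ∀ z ∈ W, dist (k c) c ≤ dist z (l c)

/-- Extremality moves `c` by a prescribed large distance `t` to a point in general position with
respect to a finite set `W`. -/
lemma ExtStar.exists_general_position {Β : Finset (Ctr X)} (hΒ : ExtStar Β) {Λ : Finset ℝ}
    {c : X} {t : ℝ} (ht : t ∈ largeElts Λ (moves Β c)) (h0 : 0 < t) (W : Finset X)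
    (hW : ∀ z ∈ W, dist z c ∈ Λ) :
    ∃ k ∈ ballStab Β, dist (k c) c = t ∧ ∀ z ∈ W, dist z (k c) = max t (dist z c) := by
  classical
  have fin : ∀ k : X ≃ᵢ X, dist (k c) c = t → (∀ z ∈ W, dist z c ≤ t → dist z (k c) = t) →
      ∀ z ∈ W, dist z (k c) = max t (dist z c) := fun k hk h z hz => by
    by_cases hz' : dist z c ≤ t
    · rw [max_eq_left hz', h z hz hz']
    · rw [max_eq_right (not_le.1 hz').le, dist_comm, dist_comm z c]
      exact dist_eq_of_lt (by rw [hk, dist_comm]; exact not_le.1 hz')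
  obtain ⟨k, hk, hkt⟩ := ht.1
  by_cases hmax : ∀ e ∈ moves Β c, e ≤ t
  · obtain ⟨l, hl, hlW⟩ := hΒ c k hk (fun l hl => hkt ▸ hmax _ ⟨l, hl, rfl⟩)
      (dist_pos.1 (hkt ▸ h0)) (insert c W)
    rw [hkt] at hlW
    have e : dist (l c) c = t := le_antisymm (hmax _ ⟨l, hl, rfl⟩)
      (by rw [dist_comm]; exact hlW c (Finset.mem_insert_self _ _))
    refine ⟨l, hl, e, fin l e fun z hz hzc => le_antisymm ?_ (hlW z (Finset.mem_insert_of_mem hz))⟩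
    exact dist_le_of_le hzc (by rw [dist_comm, e])
  · refine ⟨k, hk, hkt, fin k hkt fun z hz hzc => ?_⟩
    have hlt : dist z c < t := lt_of_le_of_ne hzc fun h =>
      hmax fun e he => le_of_mem_largeElts ht (h ▸ hW z hz) he
    rw [dist_comm] at hkt
    rw [← hkt]
    exact dist_eq_of_lt (by rw [hkt]; exact hlt)

lemma mem_ballStab_union [DecidableEq (Ctr X)] {Β₁ Β₂ : Finset (Ctr X)} {k : X ≃ᵢ X} :
    k ∈ ballStab (Β₁ ∪ Β₂) ↔ k ∈ ballStab Β₁ ∧ k ∈ ballStab Β₂ := by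
  simp only [mem_ballStab, Finset.mem_union, or_imp, forall_and]

/-- The union of two families, at a point `c` where the displacements by the first stabilizer are
dominated by those of the second. A general-position move for `Β₁` can be cut down to a swap, and
the domination shows that the swap also preserves the balls of `Β₂`. -/
lemma ExtStar.union_aux [DecidableEq (Ctr X)] {Β₁ Β₂ : Finset (Ctr X)} (h₁ : ExtStar Β₁)
    {c : X} (hdom : ∀ e ∈ moves Β₁ c, ∃ e' ∈ moves Β₂ c, e ≤ e') {k : X ≃ᵢ X}
    (hk : k ∈ ballStab (Β₁ ∪ Β₂))
    (hmax : ∀ l ∈ ballStab (Β₁ ∪ Β₂), dist (l c) c ≤ dist (k c) c) (hkc : k c ≠ c)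
    (W : Finset X) : ∃ l ∈ ballStab (Β₁ ∪ Β₂), ∀ z ∈ W, dist (k c) c ≤ dist z (l c) := by
  classical
  set t := dist (k c) c with ht
  have ht0 : 0 < t := dist_pos.2 hkc
  let V : Finset X := W ∪ Β₂.image Prod.fst
  let Λ : Finset ℝ := insert 0 (insert t (V.image fun z => dist z c))
  have htD : t ∈ moves Β₁ c := ⟨k, (mem_ballStab_union.1 hk).1, rfl⟩
  obtain ⟨e, he⟩ := largeElts_nonempty Λ ⟨t, htD⟩
  have hte : t ≤ e := (he.2 t (by simp [Λ])).1 ⟨t, htD, le_rfl⟩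
  obtain ⟨m, hm, hme, hmV⟩ := h₁.exists_general_position he (ht0.trans_le hte) V
    (fun z hz => Finset.mem_insert_of_mem (Finset.mem_insert_of_mem (Finset.mem_image_of_mem _ hz)))
  obtain ⟨σ, σ0, σ1, σ2, σ3⟩ := exists_swap' m c
  rw [dist_comm c, hme] at σ2
  have hσ : σ ∈ ballStab (Β₁ ∪ Β₂) := by
    refine mem_ballStab_union.2 ⟨localGroup_ballStab Β₁ m hm σ σ1, fun p hp => ?_⟩
    have hpV := hmV p.1 (Finset.mem_union_right _ (Finset.mem_image_of_mem _ hp))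
    by_cases hpe : e ≤ dist p.1 c
    · rw [max_eq_right hpe] at hpV
      rw [σ3 _ hpV.symm, dist_self]; exact p.2.2
    -- a centre of `Β₂` close to `c` is itself moved by at least `e` within `ballStab Β₂`
    · obtain ⟨e', he', hee⟩ := hdom e he.1
      obtain ⟨k₂, hk₂, h⟩ := mem_moves_of_dist_lt (c' := p.1)
        (by rw [dist_comm]; exact (not_le.1 hpe).trans_le hee) he'
      exact (σ2 p.1).trans_lt (hee.trans_lt (h ▸ hk₂ p hp))
  have het : e = t := le_antisymm (by have := hmax σ hσ; rwa [σ0, hme] at this) hte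
  refine ⟨σ, hσ, fun z hz => ?_⟩
  rw [σ0, hmV z (Finset.mem_union_left _ hz), het]
  exact le_max_left _ _

lemma ExtStar.union [DecidableEq (Ctr X)] {Β₁ Β₂ : Finset (Ctr X)} (h₁ : ExtStar Β₁)
    (h₂ : ExtStar Β₂) : ExtStar (Β₁ ∪ Β₂) := by
  intro c k hk hmax hkc W
  by_cases hdom : ∀ e ∈ moves Β₁ c, ∃ e' ∈ moves Β₂ c, e ≤ e'
  · exact h₁.union_aux hdom hk hmax hkc W
  · push Not at hdom
    obtain ⟨e, he, hlt⟩ := hdom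
    rw [Finset.union_comm] at hk hmax ⊢
    exact h₂.union_aux (fun e' he' => ⟨e, he, (hlt e' he').le⟩) hk hmax hkc W

/-- The action of isometries on pairs `(b, r)`: the centre is moved and the radius kept. -/
def moveCtr (g : X ≃ᵢ X) (p : Ctr X) : Ctr X := (g p.1, p.2)

lemma mem_ballStab_image [DecidableEq (Ctr X)] {Β : Finset (Ctr X)} {g k : X ≃ᵢ X} :
    k ∈ ballStab (Β.image (moveCtr g)) ↔ g⁻¹ * k * g ∈ ballStab Β := by
  simp only [mem_ballStab, Finset.forall_mem_image, moveCtr, IsometryEquiv.mul_apply, dist_inv]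

lemma ExtStar.image [DecidableEq (Ctr X)] {Β : Finset (Ctr X)} (h : ExtStar Β) (g : X ≃ᵢ X) :
    ExtStar (Β.image (moveCtr g)) := by
  classical
  intro c k hk hmax hkc W
  have e1 : ∀ m : X ≃ᵢ X, dist ((g⁻¹ * m * g) (g⁻¹ c)) (g⁻¹ c) = dist (m c) c := fun m => by
    simp only [IsometryEquiv.mul_apply, IsometryEquiv.apply_inv_self, IsometryEquiv.dist_eq]
  have e2 : ∀ l : X ≃ᵢ X, g⁻¹ * (g * l * g⁻¹) * g = l := fun l => by group
  obtain ⟨l, hl, hlW⟩ := h (g⁻¹ c) (g⁻¹ * k * g) (mem_ballStab_image.1 hk) (fun l hl => by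
    rw [e1, ← e2 l, e1]
    exact hmax _ (mem_ballStab_image.2 (by rw [e2]; exact hl)))
    (by rw [← dist_pos, e1, dist_pos]; exact hkc) (W.image (g⁻¹ : X ≃ᵢ X))
  refine ⟨g * l * g⁻¹, mem_ballStab_image.2 (by rw [e2]; exact hl), fun z hz => ?_⟩
  have := hlW _ (Finset.mem_image_of_mem _ hz)
  rw [e1, dist_inv] at this
  exact this

/-- If the orbit of `c` met only finitely many balls of radius `t = dist (k c) c`, then the orbit of
`ball c t` would be finite, hence a singleton, contradicting that `k` moves `c` out of this ball. -/
lemma extStar_of_extremality {Β : Finset (Ctr X)} {𝓑 : Set (Set X)}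
    (hΒ : ∀ k : X ≃ᵢ X, k ∈ ballStab Β ↔ k ∈ tau (1 : X ≃ᵢ X) 𝓑)
    (h : ExtremalityProperty X 𝓑) : ExtStar Β := by
  classical
  intro c k hk _ hkc W
  have ht0 : 0 < dist (k c) c := dist_pos.2 hkc
  by_contra hcon
  push Not at hcon
  have himg : ∀ l : X ≃ᵢ X, l '' ball c (dist (k c) c) = ball (l c) (dist (k c) c) :=
    fun l => l.image_ball c _
  rcases h (ball c (dist (k c) c)) ⟨_, ht0, c, rfl⟩ with hinf | ⟨D, hD⟩
  · refine hinf ((W.image fun z => ball z (dist (k c) c)).finite_toSet.subset ?_)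
    rintro _ ⟨l, hl, rfl⟩
    obtain ⟨z, hz, hzl⟩ := hcon l ((hΒ l).2 hl)
    refine Finset.mem_coe.2 (Finset.mem_image.2 ⟨z, hz, ?_⟩)
    simp only [himg]
    exact (IsUltrametricDist.ball_eq_of_mem (mem_ball.2 hzl)).symm
  · have h1 : ball c (dist (k c) c) ∈ orb 𝓑 (ball c (dist (k c) c)) :=
      ⟨1, (hΒ 1).1 (Subgroup.one_mem _), image_id _⟩
    have h2 : k '' ball c (dist (k c) c) ∈ orb 𝓑 (ball c (dist (k c) c)) :=
      ⟨k, (hΒ k).1 hk, rfl⟩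
    rw [hD, mem_singleton_iff] at h1 h2
    have h3 : k c ∈ ball c (dist (k c) c) := by
      rw [h1, ← h2]; exact mem_image_of_mem _ (mem_ball_self ht0)
    exact lt_irrefl _ (mem_ball.1 h3)

lemma exists_ballStab_eq_tau {𝓑 : Set (Set X)} (h : FDFamily 𝓑) : ∃ Β : Finset (Ctr X),
    ∀ k : X ≃ᵢ X, k ∈ ballStab Β ↔ k ∈ tau (1 : X ≃ᵢ X) 𝓑 := by
  classical
  obtain ⟨hfin, hball, -⟩ := h
  have : ∀ B : 𝓑, ∃ p : Ctr X, (B : Set X) = ball p.1 p.2 := fun B => by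
    obtain ⟨r, hr, x, hx⟩ := hball B B.2
    exact ⟨(x, ⟨r, hr⟩), hx⟩
  choose p hp using this
  have : Fintype 𝓑 := hfin.fintype
  refine ⟨Finset.univ.image p, fun k => ?_⟩
  simp only [mem_ballStab, Finset.forall_mem_image, Finset.mem_univ, true_imp_iff, tau,
    mem_ofPred_eq, Subtype.forall]
  refine forall₂_congr fun B hB => ?_
  have h1 : (1 : X ≃ᵢ X) '' B = B := image_id B
  have h2 := hp ⟨B, hB⟩
  generalize p ⟨B, hB⟩ = q at h2
  simp only at h2
  rw [h1, h2, k.image_ball]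
  refine ⟨fun h => (IsUltrametricDist.ball_eq_of_mem (mem_ball.2 h)).symm, fun h => ?_⟩
  have : k q.1 ∈ ball (k q.1) q.2 := mem_ball_self q.2.2
  rw [h] at this
  exact mem_ball.1 this

/-! ### Amalgamation -/

lemma exists_pick : ∃ pick : Set ℝ → ℝ, ∀ S : Set ℝ, S.Nonempty → pick S ∈ S := by
  classical
  exact ⟨fun S => if h : S.Nonempty then h.some else 0, fun S h => by
    simp only [h, dite_true]; exact h.some_mem⟩

/-- The points of `Z'` are moved by a single `h ∈ ballStab Β` into general position with respect
to `W`, each point `c` being displaced by a distance `t c` depending only on the set of distances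
by which `ballStab Β` can move it. -/
lemma ExtStar.exists_generic_move {Β : Finset (Ctr X)} (hΒ : ExtStar Β) {Λ : Finset ℝ}
    (h0 : (0 : ℝ) ∈ Λ) (W Z' : Finset X) (hZW : Z' ⊆ W)
    (hΛ : ∀ x ∈ W, ∀ y ∈ W, dist x y ∈ Λ)
    (hmoved : ∀ c ∈ Z', ∃ k ∈ ballStab Β, k c ≠ c) {t : X → ℝ}
    (ht : ∀ c, t c ∈ largeElts Λ (moves Β c))
    (htc : ∀ c c', largeElts Λ (moves Β c) = largeElts Λ (moves Β c') → t c = t c') :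
    ∃ h ∈ ballStab Β, ∀ c ∈ Z', ∀ z ∈ W, dist z (h c) = max (t c) (dist z c) := by
  classical
  have tail : ∀ c ∈ W, ∀ c' ∈ W, dist c c' < t c' → t c = t c' := fun c hc c' hc' h => by
    refine htc c c' (Eq.symm (largeElts_congr (hΛ c hc c' hc') (fun e he => ⟨?_, ?_⟩)
      (ht c').1 h))
    · exact mem_moves_of_dist_lt (by rw [dist_comm]; exact he)
    · exact mem_moves_of_dist_lt he
  induction Z' using Finset.induction_on with
  | empty => exact ⟨1, Subgroup.one_mem _, by simp⟩
  | insert c Z₁ hcZ ih =>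
    have hZ₁W : Z₁ ⊆ W := (Finset.subset_insert _ _).trans hZW
    have hcW : c ∈ W := hZW (Finset.mem_insert_self _ _)
    obtain ⟨h, hh, hhZ⟩ := ih hZ₁W fun c' hc' => hmoved c' (Finset.mem_insert_of_mem hc')
    by_cases hA : ∃ c' ∈ Z₁, dist c c' < t c'
    · obtain ⟨c', hc', hlt⟩ := hA
      have htt := tail c hcW c' (hZ₁W hc') hlt
      refine ⟨h, hh, fun d hd z hz => ?_⟩
      rcases Finset.mem_insert.1 hd with rfl | hd
      · have h1 := hhZ c' hc' z hz
        have h2 : dist (h d) z = dist (h c') z := dist_eq_of_lt (by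
          rw [h.dist_eq, dist_comm _ z, h1]; exact hlt.trans_le (le_max_left _ _))
        rw [dist_comm, h2, dist_comm, h1, htt]
        apply le_antisymm
        · refine max_le (le_max_left _ _) ((dist_triangle_max z d c').trans ?_)
          exact max_le (le_max_right _ _) (hlt.le.trans (le_max_left _ _))
        · refine max_le (le_max_left _ _) ((dist_triangle_max z c' d).trans ?_)
          exact max_le (le_max_right _ _) (by rw [dist_comm]; exact hlt.le.trans (le_max_left _ _))
      · exact hhZ d hd z hz
    · push Not at hA
      have hA' : ∀ c' ∈ Z₁, t c ≤ dist c c' := fun c' hc' => by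
        by_contra hlt
        have := tail c' (hZ₁W hc') c hcW (by rw [dist_comm]; exact not_le.1 hlt)
        exact hlt (this ▸ hA c' hc')
      have hhc : ∀ c' ∈ Z₁, dist (h c') c = dist c' c := fun c' hc' => by
        rw [dist_comm, hhZ c' hc' c hcW, max_eq_right (hA c' hc'), dist_comm]
      have htpos : 0 < t c := by
        obtain ⟨k, hk, hkc⟩ := hmoved c (Finset.mem_insert_self _ _)
        exact ((ht c).2 0 h0).2 ⟨_, ⟨k, hk, rfl⟩, dist_pos.2 hkc⟩
      obtain ⟨k, hk, -, hkW⟩ := hΒ.exists_general_position (ht c) htpos (W ∪ Z₁.image h)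
        (fun z hz => by
          rcases Finset.mem_union.1 hz with hz | hz
          · exact hΛ z hz c hcW
          · obtain ⟨c', hc', rfl⟩ := Finset.mem_image.1 hz
            rw [hhc c' hc']; exact hΛ c' (hZ₁W hc') c hcW)
      obtain ⟨h', hh', hc', hZ'⟩ := (localGroup_ballStab Β).extend_one hh hk c Z₁ fun z hz => by
        rw [hkW _ (Finset.mem_union_right _ (Finset.mem_image_of_mem _ hz)), hhc z hz,
          max_eq_right (by rw [dist_comm]; exact hA' z hz)]
      refine ⟨h', hh', fun d hd z hz => ?_⟩
      rcases Finset.mem_insert.1 hd with rfl | hd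
      · rw [hc', hkW z (Finset.mem_union_left _ hz)]
      · rw [hZ' d hd, hhZ d hd z hz]

/-- If `u` agrees, up to the radii of `Β`, with some `g` preserving the family `Β`, then `u`
normalizes `ballStab Β`, so `c` and `u c` have the same displacements. -/
lemma moves_eq {Β : Finset (Ctr X)} {g u : X ≃ᵢ X} (hg : ∀ p ∈ Β, moveCtr g p ∈ Β)
    (hg' : ∀ p ∈ Β, moveCtr g⁻¹ p ∈ Β) (hu : ∀ p ∈ Β, dist (u p.1) (g p.1) < p.2) (c : X) :
    moves Β (u c) = moves Β c := by
  ext e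
  constructor
  · rintro ⟨k, hk, rfl⟩
    refine ⟨u⁻¹ * k * u, fun p hp => ?_, by
      simp only [IsometryEquiv.mul_apply, dist_inv]⟩
    simp only [IsometryEquiv.mul_apply, dist_inv]
    have h1 := hk _ (hg p hp)
    simp only [moveCtr] at h1
    have h2 := hu p hp
    refine dist_lt_of_lt (y := k (g p.1)) (by rw [k.dist_eq]; exact h2)
      (dist_lt_of_lt h1 (by rw [dist_comm]; exact h2))
  · rintro ⟨k, hk, rfl⟩
    refine ⟨u * k * u⁻¹, fun p hp => ?_, by
      simp only [IsometryEquiv.mul_apply, IsometryEquiv.inv_apply_self, IsometryEquiv.dist_eq]⟩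
    have h1 := hk _ (hg' p hp)
    have h2 := hu _ (hg' p hp)
    simp only [moveCtr, IsometryEquiv.apply_inv_self] at h1 h2
    have h3 : dist (u⁻¹ p.1) (g⁻¹ p.1) < p.2 := by
      rw [dist_inv, dist_comm]; exact h2
    simp only [IsometryEquiv.mul_apply]
    refine dist_lt_of_lt (y := u (k (g⁻¹ p.1))) ?_ (dist_lt_of_lt
      (y := u (g⁻¹ p.1)) ?_ h2)
    · rw [IsometryEquiv.dist_eq, IsometryEquiv.dist_eq]; exact h3
    · rw [IsometryEquiv.dist_eq]; exact h1

/-- Amalgamation: the finite `u`-invariant set `Z'` can be moved by `h ∈ ballStab Β` so that the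
transported tuple `h u h⁻¹` on `h Z'` is compatible with `g` on `Z`. -/
lemma ExtStar.amalgamate {ι : Type*} {Β : Finset (Ctr X)} (hΒ : ExtStar Β)
    (g u : ι → X ≃ᵢ X)
    (hg : ∀ i, ∀ p ∈ Β, moveCtr (g i) p ∈ Β) (hg' : ∀ i, ∀ p ∈ Β, moveCtr (g i)⁻¹ p ∈ Β)
    (hu : ∀ i, ∀ p ∈ Β, dist (u i p.1) (g i p.1) < p.2) (Z Z' : Finset X)
    (hZ : ∀ i, ∀ x ∈ Z, g i x ∈ Z) (hZ' : ∀ i, ∀ x ∈ Z', u i x ∈ Z')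
    (hmoved : ∀ c ∈ Z', ∃ k ∈ ballStab Β, k c ≠ c) :
    ∃ h ∈ ballStab Β, ∀ i, ∀ c ∈ Z', ∀ z ∈ Z, dist (h (u i c)) (g i z) = dist (h c) z := by
  classical
  let W := Z ∪ Z'
  let Λ : Finset ℝ := insert 0 ((W ×ˢ W).image fun p => dist p.1 p.2)
  have hΛ : ∀ x ∈ W, ∀ y ∈ W, dist x y ∈ Λ := fun x hx y hy =>
    Finset.mem_insert_of_mem (Finset.mem_image.2 ⟨(x, y), Finset.mk_mem_product hx hy, rfl⟩)
  obtain ⟨pick, hpick⟩ := exists_pick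
  let t : X → ℝ := fun c => pick (largeElts Λ (moves Β c))
  have ht : ∀ c, t c ∈ largeElts Λ (moves Β c) := fun c =>
    hpick _ (largeElts_nonempty Λ ⟨0, zero_mem_moves Β c⟩)
  obtain ⟨h, hh, hhZ⟩ := hΒ.exists_generic_move (Finset.mem_insert_self _ _) W Z'
    Finset.subset_union_right hΛ hmoved ht (fun c c' e => congrArg pick e)
  have hZW : ∀ z ∈ Z, z ∈ W := fun z hz => Finset.mem_union_left _ hz
  have hZW' : ∀ z ∈ Z', z ∈ W := fun z hz => Finset.mem_union_right _ hz
  refine ⟨h, hh, fun i c hc z hz => ?_⟩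
  have hmv : moves Β (u i c) = moves Β c := moves_eq (hg i) (hg' i) (hu i) c
  have htu : t (u i c) = t c := by simp only [t, hmv]
  have hk : (g i)⁻¹ * u i ∈ ballStab Β := fun p hp => by
    rw [IsometryEquiv.mul_apply, dist_inv]; exact hu i p hp
  have e1 : dist (u i c) (g i z) = dist (((g i)⁻¹ * u i) c) z := by
    rw [IsometryEquiv.mul_apply, dist_inv]
  have hmem := hΛ _ (hZW' _ (hZ' i c hc)) _ (hZW _ (hZ i z hz))
  have hmem' := hΛ _ (hZW' c hc) _ (hZW z hz)
  rw [dist_comm, hhZ _ (hZ' i c hc) _ (hZW _ (hZ i z hz)), dist_comm (h c),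
    hhZ c hc z (hZW z hz), htu, dist_comm (g i z), dist_comm z c, e1]
  rw [e1] at hmem
  have hD : dist (((g i)⁻¹ * u i) c) c ∈ moves Β c := ⟨_, hk, rfl⟩
  by_cases hcz : t c < dist c z
  · rw [dist_eq_of_lt (lt_of_mem_largeElts (ht c) hmem' hcz hD)]
  · have : dist (((g i)⁻¹ * u i) c) z ≤ t c := by
      by_contra hlt
      have hlt := not_le.1 hlt
      have h1 : dist c (((g i)⁻¹ * u i) c) = dist z (((g i)⁻¹ * u i) c) :=
        dist_eq_of_lt (by rw [dist_comm z]; exact (not_lt.1 hcz).trans_lt hlt)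
      have h2 := lt_of_mem_largeElts (ht c) hmem hlt hD
      rw [dist_comm, h1, dist_comm] at h2
      exact lt_irrefl _ h2
    rw [max_eq_left this, max_eq_left (not_lt.1 hcz)]

/-! ### The generic tuple -/

/-- Dense below `p`, for a set of conditions, smaller conditions being stronger. -/
def DenseBelow {P : Type*} [Preorder P] (p : P) (D : Set P) : Prop :=
  ∀ q ≤ p, ∃ q' ≤ q, q' ∈ D

lemma DenseBelow.mono {P : Type*} [Preorder P] {p : P} {D D' : Set P} (h : DenseBelow p D)
    (hD : D ⊆ D') : DenseBelow p D' := fun q hq => by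
  obtain ⟨q', h1, h2⟩ := h q hq
  exact ⟨q', h1, hD h2⟩

/-- A Rasiowa–Sikorski lemma in which the countable family of sets to be met may depend on
conditions already in the sequence. -/
lemma exists_generic_seq {P ι : Type*} [Preorder P] [Countable ι] [Nonempty ι]
    (D : P → ι → Set P) (p₀ : P) : ∃ s : ℕ → P, s 0 = p₀ ∧ Antitone s ∧
      ∀ j i, DenseBelow (s j) (D (s j) i) → ∃ k, s k ∈ D (s j) i := by
  classical
  obtain ⟨e, he⟩ := exists_surjective_nat ι
  have hstep : ∀ (p : P) (D : Set P), ∃ q ≤ p, (∃ q ≤ p, q ∈ D) → q ∈ D := fun p D => by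
    by_cases h : ∃ q ≤ p, q ∈ D
    · obtain ⟨q, h1, h2⟩ := h
      exact ⟨q, h1, fun _ => h2⟩
    · exact ⟨p, le_rfl, fun h' => absurd h' h⟩
  choose f hf1 hf2 using hstep
  -- `A k` records the first `k + 1` terms of the sequence
  let A : ℕ → ℕ → P := fun k => Nat.rec (fun _ => p₀) (fun k A =>
    Function.update A (k + 1) (f (A k) (D (A (Nat.unpair k).1) (e (Nat.unpair k).2)))) k
  have hA : ∀ k, A (k + 1) = Function.update (A k) (k + 1)
    (f (A k k) (D (A k (Nat.unpair k).1) (e (Nat.unpair k).2))) := fun k => rfl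
  have hAs : ∀ k j, j ≤ k → A k j = A j j := by
    intro k
    induction k with
    | zero => intro j hj; rw [Nat.le_zero.1 hj]
    | succ k ih =>
      intro j hj
      rcases hj.lt_or_eq with h | h
      · rw [hA, Function.update_of_ne h.ne, ih j (Nat.lt_succ_iff.1 h)]
      · rw [h]
  have hs : ∀ k, A (k + 1) (k + 1) = f (A k k) (D (A (Nat.unpair k).1 (Nat.unpair k).1)
      (e (Nat.unpair k).2)) := fun k => by
    rw [hA, Function.update_self, hAs k _ (Nat.unpair_left_le k)]
  have hanti : Antitone fun k => A k k :=
    antitone_nat_of_succ_le fun k => by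
      simp only [hs]; exact hf1 _ _
  refine ⟨fun k => A k k, rfl, hanti, fun j i hd => ?_⟩
  obtain ⟨m, rfl⟩ := he i
  refine ⟨Nat.pair j m + 1, ?_⟩
  have h1 := hs (Nat.pair j m)
  rw [Nat.unpair_pair] at h1
  simp only at h1 ⊢
  rw [h1]
  exact hf2 _ _ (hd _ (hanti (Nat.left_le_pair j m)))

/-- A condition: a tuple of isometries, of which only the restriction to the finite invariant
set `Z` matters. -/
structure Cond (X : Type*) [MetricSpace X] (n : ℕ) where
  g : Fin (n + 1) → X ≃ᵢ X
  Z : Finset X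
  inv : ∀ i, ∀ x ∈ Z, g i x ∈ Z

/-- `q ≤ p` when `q` extends `p` as a tuple of finite partial isometries. -/
instance (n : ℕ) : Preorder (Cond X n) where
  le q p := p.Z ⊆ q.Z ∧ ∀ i, ∀ x ∈ p.Z, q.g i x = p.g i x
  le_refl p := ⟨Finset.Subset.refl _, fun _ _ _ => rfl⟩
  le_trans p q r h1 h2 := ⟨h2.1.trans h1.1, fun i x hx => by rw [h1.2 i x (h2.1 hx), h2.2 i x hx]⟩

/-- The conditions that contain a copy, moved by an isometry `h`, of the finite graph `N`, where `h`
fixes `β₀` pointwise and moves the points of `β` by less than `r`. -/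
def taskSet {n : ℕ} (β β₀ : Finset X) (N : Finset (Fin (n + 1) × X × X)) (r : ℝ) :
    Set (Cond X n) :=
  {q | ∃ h : X ≃ᵢ X, (∀ b ∈ β₀, h b = b) ∧ (∀ b ∈ β, dist (h b) b < r) ∧
    ∀ e ∈ N, h e.2.1 ∈ q.Z ∧ q.g e.1 (h e.2.1) = h e.2.2}

lemma taskSet_mono {n : ℕ} (β β₀ : Finset X) (N : Finset (Fin (n + 1) × X × X)) {r r' : ℝ}
    (h : r ≤ r') : taskSet β β₀ N r ⊆ taskSet β β₀ N r' :=
  fun _ ⟨k, h1, h2, h3⟩ => ⟨k, h1, fun b hb => (h2 b hb).trans_le h, h3⟩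

lemma dense_mem {n : ℕ} (p : Cond X n) (x : X) : DenseBelow p {q | x ∈ q.Z} := by
  classical
  intro q _
  obtain ⟨u, Z, h1, h2, h3⟩ := exists_finite_invariant q.g (insert x q.Z)
  exact ⟨⟨u, Z, h3⟩, ⟨(Finset.subset_insert _ _).trans h1,
    fun i x hx => h2 i x (Finset.mem_insert_of_mem hx)⟩, h1 (Finset.mem_insert_self _ _)⟩

/-- There are uncountably many radii `r`, but countably many sets `taskSet β β₀ N r` are coinitial
among those dense below a given condition. -/
lemma exists_generic_conds [Countable X] {n : ℕ} (p₀ : Cond X n) :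
    ∃ s : ℕ → Cond X n, s 0 = p₀ ∧ Antitone s ∧ (∀ x, ∃ k, x ∈ (s k).Z) ∧
      ∀ j β β₀ N r, DenseBelow (s j) (taskSet β β₀ N r) → ∃ k, s k ∈ taskSet β β₀ N r := by
  classical
  let T := Finset X × Finset X × Finset (Fin (n + 1) × X × X)
  let O : T → ℝ → Set (Cond X n) := fun τ r => taskSet τ.1 τ.2.1 τ.2.2 r
  have hO : ∀ τ {r r' : ℝ}, r ≤ r' → O τ r ⊆ O τ r' := fun τ r r' h => taskSet_mono _ _ _ h
  let S : Cond X n → T → Set ℝ := fun p τ => {r | DenseBelow p (O τ r)}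
  let D : Cond X n → X ⊕ (T × Option ℚ) → Set (Cond X n) := fun p i =>
    Sum.elim (fun x => {q | x ∈ q.Z}) (fun y => match y.2 with
      | some a => O y.1 a
      | none => if h : ∃ r, IsLeast (S p y.1) r then O y.1 h.choose else univ) i
  have : Nonempty (X ⊕ (T × Option ℚ)) := ⟨Sum.inr ((∅, ∅, ∅), none)⟩
  obtain ⟨s, h0, hs, hd⟩ := exists_generic_seq D p₀
  refine ⟨s, h0, hs, fun x => hd 0 (Sum.inl x) (dense_mem _ x), fun j β β₀ N r hr => ?_⟩
  by_cases hl : IsLeast (S (s j) (β, β₀, N)) r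
  · have hex : ∃ r, IsLeast (S (s j) (β, β₀, N)) r := ⟨r, hl⟩
    have e1 : D (s j) (Sum.inr ((β, β₀, N), none)) = taskSet β β₀ N r := by
      simp only [D, Sum.elim_inr, dif_pos hex]
      rw [hex.choose_spec.unique hl]
    rw [← e1] at hr ⊢
    exact hd j _ hr
  · have : ∃ r' ∈ S (s j) (β, β₀, N), r' < r := by
      by_contra hcon
      push Not at hcon
      exact hl ⟨hr, hcon⟩
    obtain ⟨r', hr', hlt⟩ := this
    obtain ⟨a, ha1, ha2⟩ := exists_rat_btwn hlt
    obtain ⟨k, hk⟩ := hd j (Sum.inr ((β, β₀, N), some a))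
      (DenseBelow.mono hr' (hO (β, β₀, N) ha1.le))
    exact ⟨k, hO (β, β₀, N) ha2.le hk⟩

/-- The generic tuple: the union `γ` of a generic sequence of conditions. A finite graph `N` that is
realized densely below some condition of the sequence is realized by `γ` itself. -/
lemma exists_generic [Countable X] {n : ℕ} (p₀ : Cond X n) :
    ∃ (s : ℕ → Cond X n) (γ : Fin (n + 1) → X ≃ᵢ X), s 0 = p₀ ∧ Antitone s ∧
      (∀ k i, ∀ x ∈ (s k).Z, γ i x = (s k).g i x) ∧ (∀ x, ∃ k, x ∈ (s k).Z) ∧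
      ∀ j β β₀ N r, DenseBelow (s j) (taskSet β β₀ N r) → ∃ h : X ≃ᵢ X, (∀ b ∈ β₀, h b = b) ∧
        (∀ b ∈ β, dist (h b) b < r) ∧ ∀ e ∈ N, γ e.1 (h e.2.1) = h e.2.2 := by
  classical
  obtain ⟨s, h0, hs, hx, ht⟩ := exists_generic_conds p₀
  choose κ hκ using hx
  let f : Fin (n + 1) → X → X := fun i x => (s (κ x)).g i x
  have hf : ∀ k i, ∀ x ∈ (s k).Z, f i x = (s k).g i x := fun k i x hxk => by
    rcases le_total k (κ x) with h | h
    · exact (hs h).2 i x hxk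
    · exact ((hs h).2 i x (hκ x)).symm
  have hiso : ∀ i x y, dist (f i x) (f i y) = dist x y := fun i x y => by
    have hxm : x ∈ (s (max (κ x) (κ y))).Z := (hs (le_max_left _ _)).1 (hκ x)
    have hym : y ∈ (s (max (κ x) (κ y))).Z := (hs (le_max_right _ _)).1 (hκ y)
    rw [hf _ i x hxm, hf _ i y hym, IsometryEquiv.dist_eq]
  have hsurj : ∀ i, Function.Surjective (f i) := fun i y => by
    have := Finset.surjOn_of_injOn_of_card_le (s := (s (κ y)).Z) (t := (s (κ y)).Z)
      ((s (κ y)).g i) (fun x hx => (s (κ y)).inv i x hx)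
      ((s (κ y)).g i).injective.injOn le_rfl
    obtain ⟨x, hx, hxy⟩ := this (hκ y)
    exact ⟨x, by rw [hf _ i x hx, hxy]⟩
  refine ⟨s, fun i => IsometryEquiv.mk (Equiv.ofBijective (f i)
    ⟨(Isometry.of_dist_eq (hiso i)).injective, hsurj i⟩) (Isometry.of_dist_eq (hiso i)),
    h0, hs, hf, fun x => ⟨κ x, hκ x⟩, fun j β β₀ N r hd => ?_⟩
  obtain ⟨k, h, h1, h2, h3⟩ := ht j β β₀ N r hd
  refine ⟨h, h1, h2, fun e he => ?_⟩
  rw [← (h3 e he).2]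
  exact hf k e.1 _ (h3 e he).1

/-- A condition can be extended by a compatible copy of a finite invariant set. -/
lemma exists_glue {n : ℕ} (q : Cond X n) (u : Fin (n + 1) → X ≃ᵢ X) (Z' : Finset X)
    (hZ' : ∀ i, ∀ x ∈ Z', u i x ∈ Z') (h : X ≃ᵢ X)
    (hh : ∀ i, ∀ c ∈ Z', ∀ z ∈ q.Z, dist (h (u i c)) (q.g i z) = dist (h c) z) :
    ∃ q' ≤ q, ∀ i, ∀ c ∈ Z', h c ∈ q'.Z ∧ q'.g i (h c) = h (u i c) := by
  classical
  let f : Fin (n + 1) → X → X := fun i x => if x ∈ q.Z then q.g i x else h (u i (h⁻¹ x))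
  have hf1 : ∀ i, ∀ x ∈ q.Z, f i x = q.g i x := fun i x hx => by simp [f, hx]
  have hf2 : ∀ i, ∀ c ∈ Z', f i (h c) = h (u i c) := fun i c hc => by
    by_cases hz : h c ∈ q.Z
    · rw [hf1 i _ hz]
      have := hh i c hc _ hz
      rw [dist_self, dist_eq_zero] at this
      exact this.symm
    · simp [f, hz, IsometryEquiv.inv_apply_self]
  have hext : ∀ i, ∃ g ∈ (⊤ : Subgroup (X ≃ᵢ X)), ∀ x ∈ q.Z ∪ Z'.image h, g x = f i x :=
    fun i => by
    refine localGroup_top.extend _ (f i) (fun x _ => ?_) ?_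
    · by_cases hx : x ∈ q.Z
      · exact ⟨q.g i, Subgroup.mem_top _, (hf1 i x hx).symm⟩
      · exact ⟨h * u i * h⁻¹, Subgroup.mem_top _, by simp [f, hx, IsometryEquiv.mul_apply]⟩
    · intro x hx y hy
      rcases Finset.mem_union.1 hx with hx | hx
      · rcases Finset.mem_union.1 hy with hy | hy
        · rw [hf1 i x hx, hf1 i y hy, IsometryEquiv.dist_eq]
        · obtain ⟨c, hc, rfl⟩ := Finset.mem_image.1 hy
          rw [hf1 i x hx, hf2 i c hc, dist_comm, hh i c hc x hx, dist_comm]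
      · obtain ⟨c, hc, rfl⟩ := Finset.mem_image.1 hx
        rcases Finset.mem_union.1 hy with hy | hy
        · rw [hf1 i y hy, hf2 i c hc, hh i c hc y hy]
        · obtain ⟨d, hd, rfl⟩ := Finset.mem_image.1 hy
          rw [hf2 i c hc, hf2 i d hd]
          simp only [IsometryEquiv.dist_eq]
  choose g _ hg using hext
  have hmem : ∀ c ∈ Z', h c ∈ q.Z ∪ Z'.image h := fun c hc =>
    Finset.mem_union_right _ (Finset.mem_image_of_mem _ hc)
  have hg1 : ∀ i, ∀ x ∈ q.Z, g i x = q.g i x := fun i x hx => by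
    rw [hg i x (Finset.mem_union_left _ hx), hf1 i x hx]
  have hg2 : ∀ i, ∀ c ∈ Z', g i (h c) = h (u i c) := fun i c hc => by
    rw [hg i _ (hmem c hc), hf2 i c hc]
  refine ⟨⟨g, q.Z ∪ Z'.image h, fun i x hx => ?_⟩, ⟨Finset.subset_union_left, hg1⟩,
    fun i c hc => ⟨hmem c hc, hg2 i c hc⟩⟩
  rcases Finset.mem_union.1 hx with hx | hx
  · rw [hg1 i x hx]; exact Finset.mem_union_left _ (q.inv i x hx)
  · obtain ⟨c, hc, rfl⟩ := Finset.mem_image.1 hx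
    rw [hg2 i c hc]; exact hmem _ (hZ' i c hc)

/-! ### Approximation by conjugates of the generic tuple -/

/-- One piece of the conjugating isometry: the points `c` of `Z'` for which `r` is the least radius
of a ball of `Β` around `c` are conjugated into the generic tuple while the centres of the
smaller balls are fixed. -/
lemma exists_piece {n : ℕ} {s : ℕ → Cond X n} {γ : Fin (n + 1) → X ≃ᵢ X}
    (hγ : ∀ k i, ∀ x ∈ (s k).Z, γ i x = (s k).g i x)
    (hgen : ∀ j β β₀ N r, DenseBelow (s j) (taskSet β β₀ N r) → ∃ h : X ≃ᵢ X,
      (∀ b ∈ β₀, h b = b) ∧ (∀ b ∈ β, dist (h b) b < r) ∧ ∀ e ∈ N, γ e.1 (h e.2.1) = h e.2.2)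
    {Β : Finset (Ctr X)} (hΒ : ExtStar Β) {j : ℕ} (hj : ∀ p ∈ Β, p.1 ∈ (s j).Z)
    (hg : ∀ i, ∀ p ∈ Β, moveCtr (γ i) p ∈ Β) (hg' : ∀ i, ∀ p ∈ Β, moveCtr (γ i)⁻¹ p ∈ Β)
    {u : Fin (n + 1) → X ≃ᵢ X} (hu : ∀ i, ∀ p ∈ Β, dist (u i p.1) (γ i p.1) < p.2)
    {Z' : Finset X} (hZ' : ∀ i, ∀ x ∈ Z', u i x ∈ Z')
    (hmoved : ∀ c ∈ Z', ∃ k ∈ ballStab Β, k c ≠ c) (r : ℝ)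
    (hr : ∀ c ∈ Z', ∀ p ∈ Β, dist p.1 c < p.2 → r ≤ p.2) :
    ∃ h : X ≃ᵢ X, (∀ p ∈ Β, (p.2 : ℝ) < r → h p.1 = p.1) ∧
      (∀ p ∈ Β, (p.2 : ℝ) = r → dist (h p.1) p.1 < r) ∧
      ∀ i, ∀ c ∈ Z', γ i (h c) = h (u i c) := by
  classical
  obtain ⟨h, h1, h2, h3⟩ := hgen j ((Β.filter fun p => (p.2 : ℝ) = r).image Prod.fst)
    ((Β.filter fun p => (p.2 : ℝ) < r).image Prod.fst)
    ((Finset.univ ×ˢ Z').image fun e => (e.1, e.2, u e.1 e.2)) r (by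
    intro q hq
    have hqγ : ∀ i, ∀ p ∈ Β, q.g i p.1 = γ i p.1 := fun i p hp => by
      rw [hq.2 i _ (hj p hp), hγ j i _ (hj p hp)]
    obtain ⟨h, hh, hhZ⟩ := hΒ.amalgamate q.g u
      (fun i p hp => by
        have : moveCtr (q.g i) p = moveCtr (γ i) p := by simp only [moveCtr, hqγ i p hp]
        rw [this]; exact hg i p hp)
      (fun i p hp => by
        have h1 := hqγ i _ (hg' i p hp)
        simp only [moveCtr, IsometryEquiv.apply_inv_self] at h1
        have : moveCtr (q.g i)⁻¹ p = moveCtr (γ i)⁻¹ p := by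
          simp only [moveCtr]
          nth_rewrite 1 [← h1]
          rw [IsometryEquiv.inv_apply_self]
        rw [this]; exact hg' i p hp)
      (fun i p hp => by rw [hqγ i p hp]; exact hu i p hp) q.Z Z' q.inv hZ' hmoved
    -- `h` can be altered so as to fix the centres of the balls of radius less than `r`
    set β₀ := (Β.filter fun p => (p.2 : ℝ) < r).image Prod.fst with hβ₀
    have hβ : ∀ b ∈ β₀, ∀ c ∈ Z', b ≠ c ∧ dist b (h c) = dist b c := fun b hb c hc => by
      obtain ⟨p, hp, rfl⟩ := Finset.mem_image.1 hb
      obtain ⟨hp, hpr⟩ := Finset.mem_filter.1 hp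
      have hle : (p.2 : ℝ) ≤ dist p.1 c := by
        by_contra hlt
        exact absurd (hr c hc p hp (not_le.1 hlt)) (not_le.2 hpr)
      refine ⟨fun e => ?_, ?_⟩
      · rw [e, dist_self] at hle
        exact absurd hle (not_le.2 p.2.2)
      · rw [← h.dist_eq p.1 c]
        refine dist_eq_of_lt ?_
        rw [h.dist_eq, dist_comm]
        exact (hh p hp).trans_le hle
    obtain ⟨h', hh', hh'e⟩ := (localGroup_ballStab Β).extend (Z' ∪ β₀)
      (fun x => if x ∈ β₀ then x else h x)
      (fun x _ => by
        by_cases hx : x ∈ β₀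
        · exact ⟨1, Subgroup.one_mem _, by simp only [hx, if_true]; rfl⟩
        · exact ⟨h, hh, by simp only [hx, if_false]⟩)
      (fun x hx y hy => by
        by_cases hx' : x ∈ β₀
        · by_cases hy' : y ∈ β₀
          · simp only [hx', hy', if_true]
          · simp only [hx', hy', if_true, if_false]
            exact (hβ x hx' y ((Finset.mem_union.1 hy).resolve_right hy')).2
        · by_cases hy' : y ∈ β₀
          · simp only [hx', hy', if_true, if_false]
            rw [dist_comm, dist_comm x y]
            exact (hβ y hy' x ((Finset.mem_union.1 hx).resolve_right hx')).2
          · simp only [hx', hy', if_false, h.dist_eq])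
    have hZe : ∀ c ∈ Z', h' c = h c := fun c hc => by
      rw [hh'e c (Finset.mem_union_left _ hc), if_neg fun hcβ => (hβ c hcβ c hc).1 rfl]
    obtain ⟨q', hq', hglue⟩ := exists_glue q u Z' hZ' h' (fun i c hc z hz => by
      rw [hZe c hc, hZe _ (hZ' i c hc)]; exact hhZ i c hc z hz)
    refine ⟨q', hq', h', fun b hb => ?_, fun b hb => ?_, fun e he => ?_⟩
    · rw [hh'e b (Finset.mem_union_right _ hb), if_pos hb]
    · obtain ⟨p, hp, rfl⟩ := Finset.mem_image.1 hb
      rw [Finset.mem_filter] at hp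
      rw [← hp.2]
      exact hh' p hp.1
    · obtain ⟨⟨i, c⟩, hc, rfl⟩ := Finset.mem_image.1 he
      exact hglue i c (Finset.mem_product.1 hc).2)
  refine ⟨h, fun p hp hpr => h1 _ (Finset.mem_image_of_mem _ (Finset.mem_filter.2 ⟨hp, hpr⟩)),
    fun p hp hpr => h2 _ (Finset.mem_image_of_mem _ (Finset.mem_filter.2 ⟨hp, hpr⟩)),
    fun i c hc => ?_⟩
  exact h3 (i, c, u i c) (Finset.mem_image.2
    ⟨(i, c), Finset.mk_mem_product (Finset.mem_univ _) hc, rfl⟩)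

/-- The least radius of a ball of `Β` around a point, or `R` if there is none. -/
lemma exists_rho (Β : Finset (Ctr X)) (R : ℝ) (hR : ∀ p ∈ Β, (p.2 : ℝ) < R) :
    ∃ ρ : X → ℝ, ∀ c, ρ c ≤ R ∧ (∀ p ∈ Β, dist p.1 c < p.2 → ρ c ≤ p.2) ∧
      (ρ c = R ∨ ∃ p ∈ Β, (p.2 : ℝ) = ρ c ∧ dist p.1 c < p.2) := by
  classical
  have : ∀ c : X, ∃ ρ : ℝ, ρ ≤ R ∧ (∀ p ∈ Β, dist p.1 c < p.2 → ρ ≤ p.2) ∧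
      (ρ = R ∨ ∃ p ∈ Β, (p.2 : ℝ) = ρ ∧ dist p.1 c < p.2) := fun c => by
    by_cases hne : (Β.filter fun p => dist p.1 c < p.2).Nonempty
    · obtain ⟨p, hp, hmin⟩ := Finset.exists_min_image _ (fun p : Ctr X => (p.2 : ℝ)) hne
      rw [Finset.mem_filter] at hp
      exact ⟨p.2, (hR p hp.1).le, fun p' hp' h => hmin p' (Finset.mem_filter.2 ⟨hp', h⟩),
        Or.inr ⟨p, hp.1, rfl, hp.2⟩⟩
    · exact ⟨R, le_rfl, fun p hp h => absurd ⟨p, Finset.mem_filter.2 ⟨hp, h⟩⟩ hne, Or.inl rfl⟩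
  choose ρ hρ using this
  exact ⟨ρ, hρ⟩

/-- If `w` agrees with the generic tuple `γ` up to the radii of an extremal `γ`-invariant family `Β`,
then conjugates of `γ` by elements of `ballStab Β` approximate `w` on any finite set. The
conjugating element is assembled from the pieces of `exists_piece`, one for each value of the
least radius `ρ`. These pieces fit together because each fixes the centres of the smaller balls. -/
lemma exists_conj_close {n : ℕ} {s : ℕ → Cond X n} {γ : Fin (n + 1) → X ≃ᵢ X}
    (hγ : ∀ k i, ∀ x ∈ (s k).Z, γ i x = (s k).g i x)
    (hgen : ∀ j β β₀ N r, DenseBelow (s j) (taskSet β β₀ N r) → ∃ h : X ≃ᵢ X,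
      (∀ b ∈ β₀, h b = b) ∧ (∀ b ∈ β, dist (h b) b < r) ∧ ∀ e ∈ N, γ e.1 (h e.2.1) = h e.2.2)
    {Β : Finset (Ctr X)} (hΒ : ExtStar Β) {j : ℕ} (hj : ∀ p ∈ Β, p.1 ∈ (s j).Z)
    (hg : ∀ i, ∀ p ∈ Β, moveCtr (γ i) p ∈ Β) (hg' : ∀ i, ∀ p ∈ Β, moveCtr (γ i)⁻¹ p ∈ Β)
    {w : Fin (n + 1) → X ≃ᵢ X} (hw : ∀ i, ∀ p ∈ Β, dist (w i p.1) (γ i p.1) < p.2)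
    (F : Finset X) {ε : ℝ} (hε : 0 < ε) :
    ∃ h ∈ ballStab Β, ∀ i, ∀ x ∈ F, dist ((h⁻¹ * γ i * h) x) (w i x) < ε := by
  classical
  obtain ⟨u, Zf, hFZ, huw, hZf⟩ := exists_finite_invariant w (F ∪ Β.image Prod.fst)
  have hu : ∀ i, ∀ p ∈ Β, dist (u i p.1) (γ i p.1) < p.2 := fun i p hp => by
    rw [huw i p.1 (Finset.mem_union_right _ (Finset.mem_image_of_mem _ hp))]
    exact hw i p hp
  have hmv : ∀ i c, moves Β (u i c) = moves Β c := fun i => moves_eq (hg i) (hg' i) (hu i)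
  -- only the points that `ballStab Β` can move by at least `ε` matter
  set Z' := Zf.filter fun c => ∃ t ∈ moves Β c, ε ≤ t with hZ'def
  have hZ' : ∀ i, ∀ x ∈ Z', u i x ∈ Z' := fun i x hx => by
    rw [Finset.mem_filter] at hx ⊢
    rw [hmv]
    exact ⟨hZf i x hx.1, hx.2⟩
  have hmoved : ∀ c ∈ Z', ∃ k ∈ ballStab Β, k c ≠ c := fun c hc => by
    obtain ⟨-, t, ⟨k, hk, rfl⟩, ht⟩ := Finset.mem_filter.1 hc
    exact ⟨k, hk, dist_pos.1 (hε.trans_le ht)⟩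
  obtain ⟨R, hR⟩ : ∃ R : ℝ, ∀ p ∈ Β, (p.2 : ℝ) < R := by
    obtain ⟨M, hM⟩ := (Β.image fun p => (p.2 : ℝ)).bddAbove
    exact ⟨M + 1, fun p hp => (hM (Finset.mem_coe.2
      (Finset.mem_image_of_mem _ hp))).trans_lt (lt_add_one M)⟩
  obtain ⟨ρ, hρ⟩ := exists_rho Β R hR
  have hρu : ∀ i c, ρ (u i c) = ρ c := fun i c => by
    apply le_antisymm
    · rcases (hρ c).2.2 with h | ⟨p, hp, hpr, hpc⟩
      · rw [h]; exact (hρ _).1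
      · rw [← hpr]
        refine (hρ (u i c)).2.1 (moveCtr (γ i) p) (hg i p hp) (dist_lt_of_lt (y := u i p.1) ?_ ?_)
        · rw [dist_comm]; exact hu i p hp
        · rw [IsometryEquiv.dist_eq]; exact hpc
    · rcases (hρ (u i c)).2.2 with h | ⟨p, hp, hpr, hpc⟩
      · rw [h]; exact (hρ _).1
      · rw [← hpr]
        refine (hρ c).2.1 (moveCtr (γ i)⁻¹ p) (hg' i p hp) ?_
        rw [← (u i).dist_eq]
        have h1 := hu i _ (hg' i p hp)
        simp only [moveCtr, IsometryEquiv.apply_inv_self] at h1 ⊢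
        exact dist_lt_of_lt h1 hpc
  have hpieces : ∀ r : ℝ, ∃ h : X ≃ᵢ X, (∀ p ∈ Β, (p.2 : ℝ) < r → h p.1 = p.1) ∧
      (∀ p ∈ Β, (p.2 : ℝ) = r → dist (h p.1) p.1 < r) ∧
      ∀ i, ∀ c ∈ Z'.filter (fun c => ρ c = r), γ i (h c) = h (u i c) := fun r =>
    exists_piece hγ hgen hΒ hj hg hg' hu
      (fun i x hx => by
        rw [Finset.mem_filter] at hx ⊢
        exact ⟨hZ' i x hx.1, by rw [hρu]; exact hx.2⟩)
      (fun c hc => hmoved c (Finset.mem_filter.1 hc).1) r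
      (fun c hc p hp h => by
        rw [← (Finset.mem_filter.1 hc).2]
        exact (hρ c).2.1 p hp h)
  choose H H1 H2 H3 using hpieces
  have cross : ∀ c d, ρ c < ρ d → dist (H (ρ c) c) (H (ρ d) d) = dist c d := fun c d hlt => by
    rcases (hρ c).2.2 with h | ⟨p, hp, hpr, hpc⟩
    · exact absurd hlt (not_lt.2 (h ▸ (hρ d).1))
    · have hle : ρ c ≤ dist p.1 d := by
        by_contra hcon
        exact absurd ((hρ d).2.1 p hp (by rw [hpr]; exact not_le.1 hcon))
          (not_le.2 (hpr ▸ hlt))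
      have e1 : dist (H (ρ c) c) p.1 < ρ c := by
        refine dist_lt_of_lt (y := H (ρ c) p.1) ?_ (H2 _ p hp hpr)
        rw [IsometryEquiv.dist_eq, dist_comm, ← hpr]; exact hpc
      have e2 : dist p.1 (H (ρ d) d) = dist p.1 d := by
        nth_rewrite 1 [← H1 (ρ d) p hp (hpr ▸ hlt)]
        rw [IsometryEquiv.dist_eq]
      have e3 : dist c d = dist p.1 d := dist_eq_of_lt (by
        rw [dist_comm]
        exact (hpr ▸ hpc : dist p.1 c < ρ c).trans_le hle)
      rw [dist_eq_of_lt (e1.trans_le (hle.trans_eq e2.symm)), e2, e3]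
  obtain ⟨h, hh, hhe⟩ := (localGroup_ballStab Β).extend Z' (fun c => H (ρ c) c)
    (fun c _ => by
      rcases (hρ c).2.2 with h | ⟨p, hp, hpr, hpc⟩
      · refine ⟨H (ρ c), fun p hp => ?_, rfl⟩
        rw [H1 (ρ c) p hp (h ▸ hR p hp), dist_self]; exact p.2.2
      · obtain ⟨σ, σ0, σ1, σ2, -⟩ := exists_swap' (H (ρ c)) c
        refine ⟨σ, fun p' hp' => ?_, σ0⟩
        rcases lt_or_ge (p'.2 : ℝ) (ρ c) with hlt | hge
        · have e1 := H1 (ρ c) p' hp' hlt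
          have e2 : (H (ρ c))⁻¹ p'.1 = p'.1 := by
            nth_rewrite 1 [← e1]
            rw [IsometryEquiv.inv_apply_self]
          have e3 : σ p'.1 = p'.1 := by
            rcases σ1 p'.1 with e | e | e
            · exact e
            · rw [e, e1]
            · rw [e, e2]
          rw [e3, dist_self]; exact p'.2.2
        · refine (σ2 p'.1).trans_lt (lt_of_lt_of_le ?_ hge)
          have hpc' : dist p.1 c < ρ c := hpr ▸ hpc
          refine dist_lt_of_lt (y := p.1) (by rw [dist_comm]; exact hpc')
            (dist_lt_of_lt (y := H (ρ c) p.1) (by rw [dist_comm]; exact H2 _ p hp hpr) ?_)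
          rw [IsometryEquiv.dist_eq]; exact hpc')
    (fun c _ d _ => by
      rcases lt_trichotomy (ρ c) (ρ d) with hlt | heq | hgt
      · exact cross c d hlt
      · rw [heq, IsometryEquiv.dist_eq]
      · rw [dist_comm, cross d c hgt, dist_comm])
  refine ⟨h, hh, fun i x hx => ?_⟩
  have hxF : x ∈ F ∪ Β.image Prod.fst := Finset.mem_union_left _ hx
  rw [← huw i x hxF]
  by_cases hxZ : x ∈ Z'
  · have e1 : γ i (h x) = h (u i x) := by
      rw [hhe x hxZ, H3 (ρ x) i x (Finset.mem_filter.2 ⟨hxZ, rfl⟩), hhe _ (hZ' i x hxZ), hρu]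
    rw [IsometryEquiv.mul_apply, IsometryEquiv.mul_apply, e1, IsometryEquiv.inv_apply_self,
      dist_self]
    exact hε
  · have hl : (u i)⁻¹ * h⁻¹ * γ i * h ∈ ballStab Β := fun p hp => by
      simp only [IsometryEquiv.mul_apply, dist_inv]
      have h1 := hh p hp
      have h2 := hh _ (hg i p hp)
      have h3 := hu i p hp
      simp only [moveCtr] at h2
      refine dist_lt_of_lt (y := γ i p.1) (by rw [IsometryEquiv.dist_eq]; exact h1)
        (dist_lt_of_lt (y := h (γ i p.1)) (by rw [dist_comm]; exact h2) ?_)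
      rw [IsometryEquiv.dist_eq, dist_comm]; exact h3
    have h4 : ¬ ε ≤ dist (((u i)⁻¹ * h⁻¹ * γ i * h) x) x := fun hle =>
      hxZ (Finset.mem_filter.2 ⟨hFZ hxF, _, ⟨_, hl, rfl⟩, hle⟩)
    rw [not_le] at h4
    simp only [IsometryEquiv.mul_apply] at h4 ⊢
    rwa [dist_inv] at h4

/-! ### Topology -/

lemma mem_closure_of_close {ι : Type*} {S : Set (ι → X ≃ᵢ X)} {w : ι → X ≃ᵢ X}
    (h : ∀ (F : Finset X) (ε : ℝ), 0 < ε → ∃ v ∈ S, ∀ i, ∀ x ∈ F, dist (v i x) (w i x) < ε) :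
    w ∈ closure S := by
  classical
  have h' : ∀ p : Finset X × ℕ, ∃ v ∈ S, ∀ i, ∀ x ∈ p.1,
      dist (v i x) (w i x) < 1 / ((p.2 : ℝ) + 1) := fun p => h p.1 _ (by positivity)
  choose v hv hvw using h'
  refine mem_closure_of_tendsto (f := v) (b := Filter.atTop) ?_ (Filter.Eventually.of_forall hv)
  refine tendsto_pi_nhds.2 fun i => ?_
  have hind : IsInducing (fun g : X ≃ᵢ X => (g : X → X)) := ⟨rfl⟩
  refine hind.tendsto_nhds_iff.2 (tendsto_pi_nhds.2 fun x => Metric.tendsto_atTop.2 fun ε hε => ?_)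
  obtain ⟨m, hm⟩ := exists_nat_one_div_lt hε
  refine ⟨({x}, m), fun p hp => ?_⟩
  have hx : x ∈ p.1 := hp.1 (Finset.mem_singleton_self x)
  refine (hvw p i x hx).trans (lt_of_le_of_lt ?_ hm)
  have : (m : ℝ) ≤ p.2 := Nat.cast_le.2 hp.2
  exact one_div_le_one_div_of_le (by positivity) (by linarith)

lemma isOpen_close {ι : Type*} [Finite ι] (Β : Finset (Ctr X)) (γ : ι → X ≃ᵢ X) :
    IsOpen {w : ι → X ≃ᵢ X | ∀ i, ∀ p ∈ Β, dist (w i p.1) (γ i p.1) < p.2} := by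
  have e : {w : ι → X ≃ᵢ X | ∀ i, ∀ p ∈ Β, dist (w i p.1) (γ i p.1) < p.2} =
      ⋂ i, ⋂ p ∈ Β, {w | dist (w i p.1) (γ i p.1) < p.2} := by
    ext w; simp
  rw [e]
  refine isOpen_iInter_of_finite fun i => isOpen_biInter_finset fun p _ => ?_
  have hc : Continuous fun w : ι → X ≃ᵢ X => w i p.1 :=
    (continuous_apply p.1).comp (continuous_induced_dom.comp (continuous_apply i))
  exact isOpen_lt (hc.dist continuous_const) continuous_const

lemma mem_closure_conj {n : ℕ} {s : ℕ → Cond X n} {γ : Fin (n + 1) → X ≃ᵢ X}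
    (hγ : ∀ k i, ∀ x ∈ (s k).Z, γ i x = (s k).g i x)
    (hgen : ∀ j β β₀ N r, DenseBelow (s j) (taskSet β β₀ N r) → ∃ h : X ≃ᵢ X,
      (∀ b ∈ β₀, h b = b) ∧ (∀ b ∈ β, dist (h b) b < r) ∧ ∀ e ∈ N, γ e.1 (h e.2.1) = h e.2.2)
    {Β : Finset (Ctr X)} (hΒ : ExtStar Β) {j : ℕ} (hj : ∀ p ∈ Β, p.1 ∈ (s j).Z)
    (hg : ∀ i, ∀ p ∈ Β, moveCtr (γ i) p ∈ Β) (hg' : ∀ i, ∀ p ∈ Β, moveCtr (γ i)⁻¹ p ∈ Β)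
    {w : Fin (n + 1) → X ≃ᵢ X} (hw : ∀ i, ∀ p ∈ Β, dist (w i p.1) (γ i p.1) < p.2)
    {S : Set (X ≃ᵢ X)} (hS : ∀ h ∈ ballStab Β, h ∈ S) :
    w ∈ closure {w | ∃ h ∈ S, ∀ i, w i = h * γ i * h⁻¹} := by
  refine mem_closure_of_close fun F ε hε => ?_
  obtain ⟨h, hh, hF⟩ := exists_conj_close hγ hgen hΒ hj hg hg' hw F hε
  exact ⟨fun i => h⁻¹ * γ i * h, ⟨h⁻¹, hS _ (Subgroup.inv_mem _ hh), fun i => by rw [inv_inv]⟩, hF⟩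

/-- Every extremal family of balls with centres in `Z` can be enlarged, within `Z`, to an extremal
family that is invariant under isometries preserving the finite set `Z`. -/
lemma ExtStar.exists_invariant {ι : Type*} {Β₀ : Finset (Ctr X)} (hΒ₀ : ExtStar Β₀) (Z : Finset X)
    (hZ : ∀ p ∈ Β₀, p.1 ∈ Z) (γ : ι → X ≃ᵢ X) (hγ : ∀ i, γ i ∈ setStab (Z : Set X)) :
    ∃ Β : Finset (Ctr X), Β₀ ⊆ Β ∧ ExtStar Β ∧ (∀ p ∈ Β, p.1 ∈ Z) ∧
      (∀ i, ∀ p ∈ Β, moveCtr (γ i) p ∈ Β) ∧ ∀ i, ∀ p ∈ Β, moveCtr (γ i)⁻¹ p ∈ Β := by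
  classical
  let 𝒞 := ((Z ×ˢ Β₀.image Prod.snd).powerset).filter fun Β => Β₀ ⊆ Β ∧ ExtStar Β
  have hne : 𝒞.Nonempty := ⟨Β₀, Finset.mem_filter.2 ⟨Finset.mem_powerset.2 fun p hp =>
    Finset.mem_product.2 ⟨hZ p hp, Finset.mem_image_of_mem _ hp⟩, Finset.Subset.refl _, hΒ₀⟩⟩
  obtain ⟨Β, hΒ, hmax⟩ := Finset.exists_max_image 𝒞 Finset.card hne
  obtain ⟨hsub, h0, hext⟩ := Finset.mem_filter.1 hΒ
  rw [Finset.mem_powerset] at hsub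
  have key : ∀ g ∈ setStab (Z : Set X), ∀ p ∈ Β, moveCtr g p ∈ Β := fun g hg p hp => by
    have hmem : Β ∪ Β.image (moveCtr g) ∈ 𝒞 := by
      refine Finset.mem_filter.2 ⟨Finset.mem_powerset.2 (Finset.union_subset hsub ?_),
        h0.trans Finset.subset_union_left, hext.union (hext.image g)⟩
      intro x hx
      obtain ⟨y, hy, rfl⟩ := Finset.mem_image.1 hx
      obtain ⟨h1, h2⟩ := Finset.mem_product.1 (hsub hy)
      exact Finset.mem_product.2 ⟨(hg _).2 h1, h2⟩
    have := Finset.eq_of_subset_of_card_le Finset.subset_union_left (hmax _ hmem)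
    rw [this]
    exact Finset.mem_union_right _ (Finset.mem_image_of_mem _ hp)
  exact ⟨Β, h0, hext, fun p hp => (Finset.mem_product.1 (hsub hp)).1, fun i => key _ (hγ i),
    fun i => key _ (Subgroup.inv_mem _ (hγ i))⟩

end UltraGen

open UltraGen in
theorem main_lemma_generic_tuple
    {X : Type*} [MetricSpace X] [Countable X] [IsUltrametricDist X]
    (n : ℕ) (𝓐 : Set (Set X)) (h𝓐 : FDFamily 𝓐) :
    ∃ γ : Fin (n + 1) → X ≃ᵢ X, (∀ i, γ i ∈ tau (1 : X ≃ᵢ X) 𝓐) ∧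
      (∀ 𝓑 : Set (Set X), FDFamily 𝓑 → ExtremalityProperty X 𝓑 →
        ∃ U : Set (Fin (n + 1) → X ≃ᵢ X), IsOpen U ∧
          (U ∩ {w | ∀ i, w i ∈ tau (1 : X ≃ᵢ X) 𝓐}).Nonempty ∧
          U ∩ {w | ∀ i, w i ∈ tau (1 : X ≃ᵢ X) 𝓐} ⊆
            closure {w | ∃ h ∈ tau (1 : X ≃ᵢ X) 𝓑, ∀ i, w i = h * γ i * h⁻¹}) ∧
      (ExtremalityProperty X 𝓐 →
        {w : Fin (n + 1) → X ≃ᵢ X | ∀ i, w i ∈ tau (1 : X ≃ᵢ X) 𝓐} ⊆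
          closure {w | ∃ h ∈ tau (1 : X ≃ᵢ X) 𝓐, ∀ i, w i = h * γ i * h⁻¹}) := by
  classical
  obtain ⟨Β, hΒ⟩ := exists_ballStab_eq_tau h𝓐
  obtain ⟨s, γ, hs0, hs, hγ, hex, hgen⟩ := exists_generic
    (⟨fun _ => 1, Β.image Prod.fst, fun _ _ hx => hx⟩ : Cond X n)
  have hfix : ∀ i, ∀ p ∈ Β, γ i p.1 = p.1 := fun i p hp => by
    rw [hγ 0 i p.1 (by rw [hs0]; exact Finset.mem_image_of_mem _ hp), hs0]
    rfl
  have hfix' : ∀ i, ∀ p ∈ Β, (γ i)⁻¹ p.1 = p.1 := fun i p hp => by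
    nth_rewrite 1 [← hfix i p hp]
    rw [IsometryEquiv.inv_apply_self]
  have hγA : ∀ i, γ i ∈ tau (1 : X ≃ᵢ X) 𝓐 := fun i => (hΒ _).1 fun p hp => by
    rw [hfix i p hp, dist_self]; exact p.2.2
  refine ⟨γ, hγA, fun 𝓑 h𝓑 hE => ?_, fun hE w hw => ?_⟩
  · obtain ⟨Β₀, hΒ₀⟩ := exists_ballStab_eq_tau h𝓑
    choose κ hκ using hex
    -- a stage of the construction at which all centres of `Β₀` are present
    obtain ⟨m, hm⟩ : ∃ m, ∀ p ∈ Β₀, p.1 ∈ (s m).Z :=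
      ⟨Β₀.sup fun p => κ p.1, fun p hp => (hs (Finset.le_sup (f := fun p : Ctr X => κ p.1) hp)).1
        (hκ p.1)⟩
    have hstab : ∀ i, γ i ∈ setStab ((s m).Z : Set X) := fun i x => by
      have hmaps : ∀ x ∈ (s m).Z, γ i x ∈ (s m).Z := fun x hx => by
        rw [hγ m i x hx]; exact (s m).inv i x hx
      refine ⟨fun hx => ?_, hmaps x⟩
      obtain ⟨y, hy, hxy⟩ := Finset.surjOn_of_injOn_of_card_le (s := (s m).Z) (t := (s m).Z)
        (γ i) hmaps (γ i).injective.injOn le_rfl hx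
      rw [← (γ i).injective hxy]; exact hy
    obtain ⟨Β₁, hsub, hext, hZ, hg, hg'⟩ :=
      (extStar_of_extremality hΒ₀ hE).exists_invariant (s m).Z hm γ hstab
    refine ⟨{w | ∀ i, ∀ p ∈ Β₁, dist (w i p.1) (γ i p.1) < p.2}, isOpen_close Β₁ γ,
      ⟨γ, fun i p _ => by rw [dist_self]; exact p.2.2, hγA⟩, fun w hw => ?_⟩
    exact mem_closure_conj hγ hgen hext hZ hg hg' hw.1
      fun h hh => (hΒ₀ h).1 fun p hp => hh p (hsub hp)
  · refine mem_closure_conj hγ hgen (extStar_of_extremality hΒ hE) (j := 0)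
      (fun p hp => by rw [hs0]; exact Finset.mem_image_of_mem _ hp)
      (fun i p hp => ?_) (fun i p hp => ?_) (fun i p hp => ?_) fun h hh => (hΒ h).1 hh
    · have : moveCtr (γ i) p = p := by simp only [moveCtr, hfix i p hp]
      rw [this]; exact hp
    · have : moveCtr (γ i)⁻¹ p = p := by simp only [moveCtr, hfix' i p hp]
      rw [this]; exact hp
    · rw [hfix i p hp]
      exact (hΒ (w i)).2 (hw i) p hp
end

section
/- Let X be a Polish ultrametric space. There exists a countable dense subspace X' ⊆ X such that for every g ∈ Iso(X) and every FD family 𝓑 in X there exists g' ∈ Iso(X) with g'[X'] = X' and g' ∈ τ(g,𝓑). In particular, the set of isometries of X that map X' onto X' is dense in Iso(X). -/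
/-! The group `Iso(X)` is separable in the topology of pointwise convergence: restriction to a
countable dense set `D ⊆ X` embeds it in the second countable space `D → X`. Let `G` be the
subgroup generated by a countable dense set of isometries. It is countable and dense, and
`X' = G • D` is countable, dense and invariant under `G`. In an ultrametric space a ball is
determined by its radius and any of its points, so an isometry `g' ∈ G` that moves the centre of
each ball of `𝓑` to within the radius of its image under `g` satisfies `g' ∈ τ(g, 𝓑)`. -/


open Metric Set Topology

/-- Some countable set of isometries approximates every isometry at any finitely many points; that
is, `Iso(X)` is separable. -/
lemma exists_countable_approx_isometries.{u} {X : Type u} [MetricSpace X]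
    [TopologicalSpace.SeparableSpace X] :
    ∃ S : Set (X ≃ᵢ X), S.Countable ∧ ∀ (g : X ≃ᵢ X) {ι : Type u} (t : Set ι), t.Finite →
      ∀ (x : ι → X) (ε : ι → ℝ), (∀ i ∈ t, 0 < ε i) →
        ∃ h ∈ S, ∀ i ∈ t, dist (h (x i)) (g (x i)) < ε i := by
  obtain ⟨D, hDc, hDd⟩ := TopologicalSpace.exists_countable_dense X
  have : Countable D := hDc.to_subtype
  have : SecondCountableTopology X := UniformSpace.secondCountable_of_separable X
  let res : (X ≃ᵢ X) → D → X := fun g d => g d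
  obtain ⟨S, hSc, hSd⟩ := TopologicalSpace.exists_countable_dense (range res)
  choose lift hlift using fun r : range res => r.2
  refine ⟨lift '' S, hSc.image _, fun g ι t ht x ε hε => ?_⟩
  have hclose : ∀ i, ∃ d : D, i ∈ t → dist (x i) d < ε i / 3 := by
    intro i
    by_cases hi : i ∈ t
    · obtain ⟨y, hy, hxy⟩ := hDd.exists_dist_lt (x i) (by linarith [hε i hi] : 0 < ε i / 3)
      exact ⟨⟨y, hy⟩, fun _ => hxy⟩
    · obtain ⟨y, hy, -⟩ := hDd.exists_dist_lt (x i) one_pos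
      exact ⟨⟨y, hy⟩, fun h => absurd h hi⟩
  choose d hd using hclose
  have hopen : IsOpen (⋂ i ∈ t, {r : range res | dist (r.1 (d i)) (g (d i)) < ε i / 3}) := by
    refine ht.isOpen_biInter fun i _ => isOpen_lt ?_ continuous_const
    exact ((continuous_apply (d i)).comp continuous_subtype_val).dist continuous_const
  obtain ⟨r, hr, hrS⟩ := hSd.inter_open_nonempty _ hopen
    ⟨⟨res g, g, rfl⟩, mem_iInter₂.2 fun i hi => by
      have := hε i hi
      simp only [mem_ofPred_eq, res, dist_self]
      linarith⟩
  refine ⟨lift r, mem_image_of_mem _ hrS, fun i hi => ?_⟩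
  have h1 : dist (lift r (d i)) (g (d i)) < ε i / 3 := by
    have h := mem_iInter₂.1 hr i hi
    rw [mem_ofPred_eq, ← hlift r] at h
    exact h
  have h2 : dist (lift r (x i)) (lift r (d i)) < ε i / 3 := by
    rw [(lift r).dist_eq]; exact hd i hi
  have h3 : dist (g (d i)) (g (x i)) < ε i / 3 := by
    rw [g.dist_eq, dist_comm]; exact hd i hi
  linarith [dist_triangle4 (lift r (x i)) (lift r (d i)) (g (d i)) (g (x i))]

open UltraGen in
theorem exists_countable_dense_isometry_invariant_subspace
    {X : Type*} [MetricSpace X] [TopologicalSpace.SeparableSpace X] [CompleteSpace X]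
    [IsUltrametricDist X] :
    ∃ X' : Set X, X'.Countable ∧ Dense X' ∧
      (∀ (g : X ≃ᵢ X) (𝓑 : Set (Set X)), FDFamily 𝓑 →
        ∃ g' : X ≃ᵢ X, g' '' X' = X' ∧ g' ∈ tau g 𝓑) ∧
      Dense {g : X ≃ᵢ X | g '' X' = X'} := by
  obtain ⟨D, hDc, hDd⟩ := TopologicalSpace.exists_countable_dense X
  obtain ⟨S, hSc, hS⟩ := exists_countable_approx_isometries (X := X)
  let G : Subgroup (X ≃ᵢ X) := Subgroup.closure S
  have : Countable S := hSc.to_subtype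
  have : Countable (FreeGroup S) := Quot.mk_surjective.countable
  have : Countable G := by
    have hG : (FreeGroup.lift ((↑) : S → X ≃ᵢ X)).range = G := by
      rw [FreeGroup.range_lift_eq_closure, Subtype.range_coe]
    rw [← hG]
    exact (MonoidHom.rangeRestrict_surjective _).countable
  let X' : Set X := ⋃ g : G, (g : X ≃ᵢ X) '' D
  have hsub : ∀ h ∈ G, h '' X' ⊆ X' := by
    rintro h hh _ ⟨_, hy, rfl⟩
    obtain ⟨k, z, hz, rfl⟩ := mem_iUnion.1 hy
    exact mem_iUnion.2 ⟨⟨h, hh⟩ * k, z, hz, rfl⟩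
  have hinv : ∀ h ∈ S, h '' X' = X' := by
    intro h hh
    have hG : h ∈ G := Subgroup.subset_closure hh
    refine (hsub h hG).antisymm fun y hy => ?_
    exact ⟨h⁻¹ y, hsub _ (G.inv_mem hG) (mem_image_of_mem _ hy), h.apply_symm_apply y⟩
  refine ⟨X', countable_iUnion fun g => hDc.image _, ?_, ?_, ?_⟩
  · exact hDd.mono fun x hx => mem_iUnion.2 ⟨1, x, hx, rfl⟩
  · intro g 𝓑 h𝓑
    choose r hr c hc using fun B : 𝓑 => h𝓑.2.1 B.1 B.2
    have : Finite 𝓑 := h𝓑.1.to_subtype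
    obtain ⟨h, hhS, hh⟩ := hS g (univ : Set 𝓑) finite_univ c r fun B _ => hr B
    refine ⟨h, hinv h hhS, fun B hB => ?_⟩
    have hB' : B = ball (c ⟨B, hB⟩) (r ⟨B, hB⟩) := hc ⟨B, hB⟩
    rw [hB', h.image_ball, g.image_ball]
    exact IsUltrametricDist.ball_eq_of_mem (by
      rw [mem_ball, dist_comm]; exact hh ⟨B, hB⟩ (mem_univ _))
  · refine dense_iff_inter_open.2 ?_
    rintro _ ⟨V, hV, rfl⟩ ⟨g, hg⟩
    obtain ⟨I, u, hu, hIu⟩ := isOpen_pi_iff.1 hV _ hg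
    have hball : ∀ i, ∃ ε : ℝ, i ∈ I → 0 < ε ∧ ball (g i) ε ⊆ u i := by
      intro i
      by_cases hi : i ∈ I
      · obtain ⟨ε, hε, h⟩ := Metric.isOpen_iff.1 (hu i hi).1 _ (hu i hi).2
        exact ⟨ε, fun _ => ⟨hε, h⟩⟩
      · exact ⟨0, fun h => absurd h hi⟩
    choose ε hε using hball
    obtain ⟨h, hhS, hh⟩ := hS g (I : Set X) I.finite_toSet id ε fun i hi => (hε i hi).1
    exact ⟨h, hIu fun i hi => (hε i hi).2 (hh i hi), hinv h hhS⟩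
end
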